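/- Let α = 1, ρ ∈ (0,1), and let X be a stable process with parameters (1, ρ) issued from a point x₀ ≠ 0. Then almost surely U_t / log t → ∞ as t → ∞. -/

import Mathlib

/-!
The exponent in `stableExponent 1 ρ` takes the same value at `z` and `-z`. Characteristic functions
are Hermitian, so this value must be real, which forces `ρ = 1 / 2` (`rho_eq_half`): `X` is the
symmetric Cauchy process, with `Ψ z = |z|`, and its increments over a time step `h` have the Cauchy
law of scale `h` (`map_increment`).

Consider the time blocks `(2 T, 3 T]` with `T = 16 ^ k`. Since the Lévy density is a multiple of
`z⁻²`, the rate at which the process jumps across the origin from `x < 0` is of order `|x|⁻¹`, while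
its position at times in a block has a density bounded below near the origin as long as `|X T|` is
at most a multiple of `T`. As `|x|⁻¹` is not integrable, the expected number of upcrossings in a
block is infinite. Quantitatively, count the steps of a grid of mesh `T / m` that go from below
`-δ T` to above `δ T`: the first moment of the count is of order `log (1 / δ)` and its second moment
is bounded in terms of `δ` only, both uniformly in `m`. Expanding `exp (-l * count)` to second order
gives, for every `M`, parameters `δ` and `l` for which the conditional mean of that weight is at most
`1 - 2 l M` (`exists_block`). On a càdlàg path a fine enough grid has at most as many crossings of the
strip as there are jumps from the negative to the positive half-line (`eventually_crossCount_le`), so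
the lower limit of the weights along `m → ∞`, `blockWeight`, is at least `exp (-l N)` when the block
contains `N` upcrossings.

The bound of `exists_block` needs `|X T| ≤ R ^ 2 T`. The remaining positions are handled by the
function `1 + η √(|X T| / T)`: half-order moments of Cauchy variables are finite, and passing from
`T` to `16 T` divides `√(|X T| / T)` by `4` in mean, up to an additive constant. The product of this
function with the weights of the past blocks is a supermartingale contracting by the factor
`1 - l M` (`lintegral_step_le`). A Borel–Cantelli argument shows that almost surely the product of
the first `n` weights is eventually at most `exp (-l M n / 2)`, i.e. that there are at least `M n / 2`
upcrossings up to time `16 ^ n`. As `log (16 ^ n)` is linear in `n` and `M` is arbitrary, the ratio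
tends to infinity.
-/

open MeasureTheory ProbabilityTheory Filter Real Set
open scoped ENNReal Topology

/-- The characteristic exponent of a stable process with parameters `(α, ρ)`:
`Ψ(z) = |z|^α exp(iπα(1/2 − ρ))` for `z ≥ 0` and
`Ψ(z) = |z|^α exp(−iπα(1/2 − ρ̂))` for `z < 0`, where `ρ̂ = 1 − ρ`. -/
noncomputable def stableExponent (α ρ : ℝ) (z : ℝ) : ℂ :=
  if 0 ≤ z then
    ((|z| ^ α : ℝ) : ℂ) * Complex.exp (Complex.I * Real.pi * α * (1 / 2 - ρ))
  else
    ((|z| ^ α : ℝ) : ℂ) * Complex.exp (-(Complex.I * Real.pi * α * (1 / 2 - (1 - ρ))))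

/-- A stable process with parameters `(α, ρ)` issued from `x₀ ∈ ℝ`, on the probability
space `(Ω, P)`: almost every path is càdlàg, `X 0 = x₀` a.s., and increments are
independent of the past, with characteristic function `exp(−(t−s)Ψ(z))`. -/
structure IsStableProcess (α ρ : ℝ) (x₀ : ℝ) {Ω : Type*} [MeasurableSpace Ω]
    (P : Measure Ω) (X : ℝ → Ω → ℝ) : Prop where
  measurable : ∀ t : ℝ, Measurable (X t)
  cadlag : ∀ᵐ ω ∂P,
    (∀ t : ℝ, 0 ≤ t → ContinuousWithinAt (fun s => X s ω) (Set.Ici t) t) ∧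
    (∀ t : ℝ, 0 < t → ∃ l : ℝ, Tendsto (fun s => X s ω) (𝓝[<] t) (𝓝 l))
  init : ∀ᵐ ω ∂P, X 0 ω = x₀
  indep : ∀ s t : ℝ, 0 ≤ s → s ≤ t →
    Indep (⨆ u ∈ Set.Icc (0 : ℝ) s, MeasurableSpace.comap (X u) inferInstance)
      (MeasurableSpace.comap (fun ω => X t ω - X s ω) inferInstance) P
  charFun : ∀ s t : ℝ, 0 ≤ s → s ≤ t → ∀ z : ℝ,
    ∫ ω, Complex.exp (Complex.I * z * (X t ω - X s ω)) ∂P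
      = Complex.exp (-(((t - s : ℝ) : ℂ) * stableExponent α ρ z))

/-- The number of upcrossings of the origin by the path `X · ω` during the time set `S`:
the cardinality (in `ℕ∞`) of `{s ∈ S : X_{s−}(ω) < 0 and X_s(ω) > 0}`. -/
noncomputable def upcrossings {Ω : Type*} (X : ℝ → Ω → ℝ) (S : Set ℝ) (ω : Ω) : ℕ∞ :=
  {s : ℝ | s ∈ S ∧ Function.leftLim (fun u => X u ω) s < 0 ∧ 0 < X s ω}.encard

/-! ### The symmetric Cauchy law -/

/-- Density of the symmetric Cauchy law of scale `h`. -/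
noncomputable def cauDens (h z : ℝ) : ℝ := h / (π * (h ^ 2 + z ^ 2))

/-- The symmetric Cauchy law of scale `h > 0`, i.e. the law of an increment over a time step `h`. -/
noncomputable def cau (h : ℝ) : Measure ℝ :=
  volume.withDensity fun z => ENNReal.ofReal (cauDens h z)

lemma measurable_cauDens (h : ℝ) : Measurable (cauDens h) := by
  unfold cauDens; fun_prop

lemma cauDens_nonneg {h : ℝ} (hh : 0 < h) (z : ℝ) : 0 ≤ cauDens h z := by
  unfold cauDens; positivity

lemma cauDens_eq {h : ℝ} (hh : 0 < h) (z : ℝ) :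
    cauDens h z = cauchyPDFReal 0 h.toNNReal z := by
  rw [cauchyPDFReal_def]
  rw [Real.coe_toNNReal h hh.le, cauDens, sub_zero, div_eq_mul_inv, mul_inv, add_comm (h ^ 2)]
  ring

lemma cau_eq {h : ℝ} (hh : 0 < h) : cau h = cauchyMeasure 0 h.toNNReal := by
  have : h.toNNReal ≠ 0 := by simpa using hh
  rw [cauchyMeasure_of_scale_ne_zero _ this, cau]
  congr 1
  funext z
  rw [cauchyPDF_def, cauDens_eq hh]

lemma isProbabilityMeasure_cau {h : ℝ} (hh : 0 < h) : IsProbabilityMeasure (cau h) := by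
  rw [cau_eq hh]; infer_instance

lemma integrable_cauDens {h : ℝ} (hh : 0 < h) : Integrable (cauDens h) := by
  have : cauDens h = cauchyPDFReal 0 h.toNNReal := funext (cauDens_eq hh)
  rw [this]; fun_prop

lemma lintegral_cau (h : ℝ) {f : ℝ → ℝ≥0∞} (hf : Measurable f) :
    ∫⁻ z, f z ∂(cau h) = ∫⁻ z, ENNReal.ofReal (cauDens h z) * f z := by
  rw [cau, lintegral_withDensity_eq_lintegral_mul _ (measurable_cauDens h).ennreal_ofReal hf]
  rfl

lemma fourier_exp_neg_abs {h : ℝ} (hh : 0 < h) :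
    (FourierTransform.fourier fun x : ℝ => Complex.exp (-(2 * π * h * |x| : ℝ)))
      = fun ξ => ((cauDens h ξ : ℝ) : ℂ) := by
  funext w
  rw [Real.fourier_eq']
  have hre1 : 0 < ((2 * π * h : ℂ) - 2 * π * w * Complex.I).re := by
    simp; positivity
  have hre2 : (-(2 * π * h : ℂ) - 2 * π * w * Complex.I).re < 0 := by
    simp; positivity
  have e1 : ∀ x ∈ Iic (0 : ℝ), Complex.exp (↑(-2 * π * inner ℝ x w) * Complex.I) •
      Complex.exp (-(2 * π * h * |x| : ℝ))
        = Complex.exp (((2 * π * h : ℂ) - 2 * π * w * Complex.I) * x) := by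
    intro x hx
    rw [smul_eq_mul, ← Complex.exp_add, abs_of_nonpos hx]
    congr 1
    simp
    ring
  have e2 : ∀ x ∈ Ioi (0 : ℝ), Complex.exp (↑(-2 * π * inner ℝ x w) * Complex.I) •
      Complex.exp (-(2 * π * h * |x| : ℝ))
        = Complex.exp ((-(2 * π * h : ℂ) - 2 * π * w * Complex.I) * x) := by
    intro x hx
    rw [smul_eq_mul, ← Complex.exp_add, abs_of_pos hx]
    congr 1
    simp
    ring
  rw [← intervalIntegral.integral_Iic_add_Ioi (b := 0)
    ((integrableOn_exp_mul_complex_Iic hre1 0).congr_fun (fun x hx => (e1 x hx).symm)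
      measurableSet_Iic)
    ((integrableOn_exp_mul_complex_Ioi hre2 0).congr_fun (fun x hx => (e2 x hx).symm)
      measurableSet_Ioi),
    setIntegral_congr_fun measurableSet_Iic e1, setIntegral_congr_fun measurableSet_Ioi e2,
    integral_exp_mul_complex_Iic hre1, integral_exp_mul_complex_Ioi hre2]
  have n1 : ((2 * π * h : ℂ) - 2 * π * w * Complex.I) ≠ 0 := by
    intro h0; rw [h0] at hre1; simp at hre1
  have n2 : (-(2 * π * h : ℂ) - 2 * π * w * Complex.I) ≠ 0 := by
    intro h0; rw [h0] at hre2; simp at hre2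
  have n3 : (h ^ 2 + w ^ 2 : ℂ) ≠ 0 := by
    have : (0 : ℝ) < h ^ 2 + w ^ 2 := by positivity
    exact_mod_cast this.ne'
  have n4 : (π : ℂ) ≠ 0 := by exact_mod_cast Real.pi_ne_zero
  simp only [Complex.ofReal_zero, mul_zero, Complex.exp_zero, cauDens]
  push_cast
  rw [div_add_div _ _ n1 n2, div_eq_div_iff (mul_ne_zero n1 n2) (mul_ne_zero n4 n3)]
  ring_nf
  simp only [Complex.I_sq]
  ring

lemma charFun_cau {h : ℝ} (hh : 0 < h) (t : ℝ) :
    charFun (cau h) t = Complex.exp (-(h * |t| : ℝ)) := by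
  have hF := fourier_exp_neg_abs hh
  have hcont : Continuous fun x : ℝ => Complex.exp (-(2 * π * h * |x| : ℝ)) := by fun_prop
  have h_int : Integrable fun x : ℝ => Complex.exp (-(2 * π * h * |x| : ℝ)) := by
    have hre1 : 0 < (2 * π * h : ℂ).re := by simp; positivity
    have hre2 : (-(2 * π * h : ℂ)).re < 0 := by simp; positivity
    rw [← integrableOn_univ, ← Iic_union_Ioi (a := (0 : ℝ))]
    refine IntegrableOn.union
      ((integrableOn_exp_mul_complex_Iic hre1 0).congr_fun (fun x hx => ?_) measurableSet_Iic)
      ((integrableOn_exp_mul_complex_Ioi hre2 0).congr_fun (fun x hx => ?_) measurableSet_Ioi)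
    · rw [abs_of_nonpos hx]; push_cast; ring_nf
    · rw [abs_of_pos hx]; push_cast; ring_nf
  have key := h_int.fourierInv_fourier_eq (v := t / (2 * π))
    (by rw [hF]; exact (integrable_cauDens hh).ofReal) hcont.continuousAt
  rw [hF, Real.fourierInv_eq'] at key
  rw [charFun_apply_real, cau, integral_withDensity_eq_integral_toReal_smul
    (measurable_cauDens h).ennreal_ofReal (by simp)]
  have e3 : (-(h * |t| : ℝ) : ℂ) = -(2 * π * h * |t / (2 * π)| : ℝ) := by
    rw [abs_div, abs_of_pos (by positivity : (0 : ℝ) < 2 * π)]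
    congr 2
    field_simp
  rw [e3, ← key]
  congr 1
  funext x
  rw [ENNReal.toReal_ofReal (cauDens_nonneg hh x), Complex.real_smul, smul_eq_mul, mul_comm]
  congr 2
  simp
  field_simp

/-! ### Increments of the process -/

/-- The exponent formula gives the same value at `z` and at `-z`; a characteristic function is
Hermitian, so this value is real, which forces `ρ = 1/2`. -/
lemma rho_eq_half {Ω : Type*} [MeasurableSpace Ω] {P : Measure Ω}
    {ρ : ℝ} (hρ : ρ ∈ Set.Ioo (0 : ℝ) 1) {x₀ : ℝ} {X : ℝ → Ω → ℝ}
    (hX : IsStableProcess 1 ρ x₀ P X) : ρ = 1 / 2 := by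
  have h1 := hX.charFun 0 1 le_rfl zero_le_one 1
  have h2 := hX.charFun 0 1 le_rfl zero_le_one (-1)
  have h3 : ∫ ω, Complex.exp (Complex.I * ((-1 : ℝ) : ℂ) * (X 1 ω - X 0 ω)) ∂P
      = (starRingEnd ℂ) (∫ ω, Complex.exp (Complex.I * ((1 : ℝ) : ℂ) * (X 1 ω - X 0 ω)) ∂P) := by
    rw [← integral_conj]
    congr 1
    funext ω
    rw [← Complex.exp_conj]
    simp
  rw [h1, h2, ← Complex.exp_conj] at h3
  set θ : ℝ := π * (1 / 2 - ρ) with hθ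
  have s1 : stableExponent 1 ρ 1 = Complex.exp (θ * Complex.I) := by
    simp [stableExponent, hθ]; ring_nf
  have s2 : stableExponent 1 ρ (-1) = Complex.exp (θ * Complex.I) := by
    have : ¬ (0 : ℝ) ≤ -1 := by norm_num
    simp only [stableExponent, if_neg this, hθ]
    simp; ring_nf
  rw [s1, s2] at h3
  have e1 : Complex.exp (θ * Complex.I) = (Real.cos θ : ℂ) + (Real.sin θ : ℂ) * Complex.I := by
    rw [Complex.exp_mul_I]; push_cast; rfl
  rw [e1] at h3
  have h4 := congrArg Complex.im h3
  simp [Complex.exp_im, -Complex.ofReal_cos, -Complex.ofReal_sin] at h4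
  have h5 : Real.sin (Real.sin θ) = 0 := by
    have := Real.exp_pos (-Real.cos θ)
    have h5' : rexp (-Real.cos θ) * Real.sin (Real.sin θ) = 0 := by linarith
    exact (mul_eq_zero.mp h5').resolve_left this.ne'
  have hb := abs_le.mp (Real.abs_sin_le_one θ)
  have hpi := Real.pi_gt_three
  have h6 : Real.sin θ = 0 :=
    (Real.sin_eq_zero_iff_of_lt_of_lt (by linarith) (by linarith)).mp h5
  have h7 : θ = 0 := by
    refine (Real.sin_eq_zero_iff_of_lt_of_lt ?_ ?_).mp h6 <;> rw [hθ] <;>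
      nlinarith [hρ.1, hρ.2]
  have h8 : (1 / 2 - ρ) = 0 := by
    rcases mul_eq_zero.mp (hθ ▸ h7) with h | h
    · linarith
    · exact h
  linarith

/-- The `σ`-algebra generated by the process up to time `s`. -/
def past {Ω : Type*} (X : ℝ → Ω → ℝ) (s : ℝ) : MeasurableSpace Ω :=
  ⨆ u ∈ Set.Icc (0 : ℝ) s, MeasurableSpace.comap (X u) inferInstance

lemma past_mono {Ω : Type*} (X : ℝ → Ω → ℝ) {s t : ℝ} (h : s ≤ t) : past X s ≤ past X t :=
  biSup_mono fun _ hu => ⟨hu.1, hu.2.trans h⟩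

lemma measurable_past {Ω : Type*} (X : ℝ → Ω → ℝ) {u s : ℝ} (h0 : 0 ≤ u) (h : u ≤ s) :
    Measurable[past X s] (X u) := by
  refine Measurable.mono (comap_measurable (X u)) ?_ le_rfl
  exact le_biSup (fun u => MeasurableSpace.comap (X u) inferInstance) (show u ∈ Icc 0 s from ⟨h0, h⟩)

lemma past_le {Ω : Type*} [mΩ : MeasurableSpace Ω] {P : Measure Ω} {x₀ : ℝ} {X : ℝ → Ω → ℝ}
    (hX : IsStableProcess 1 (1 / 2) x₀ P X) (s : ℝ) : past X s ≤ mΩ :=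
  iSup₂_le fun u _ => (hX.measurable u).comap_le

section
variable {Ω : Type*} [mΩ : MeasurableSpace Ω] {P : Measure Ω} [IsProbabilityMeasure P]
  {x₀ : ℝ} {X : ℝ → Ω → ℝ}

lemma map_increment (hX : IsStableProcess 1 (1 / 2) x₀ P X) {s t : ℝ} (hs : 0 ≤ s) (hst : s < t) :
    P.map (fun ω => X t ω - X s ω) = cau (t - s) := by
  have hm : Measurable fun ω => X t ω - X s ω := (hX.measurable t).sub (hX.measurable s)
  have := isProbabilityMeasure_cau (sub_pos.2 hst)
  have := Measure.isProbabilityMeasure_map (μ := P) hm.aemeasurable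
  refine Measure.ext_of_charFun (funext fun z => ?_)
  rw [charFun_cau (sub_pos.2 hst), charFun_apply_real, integral_map hm.aemeasurable (by fun_prop)]
  have h := hX.charFun s t hs hst.le z
  have e : stableExponent 1 (1 / 2) z = (|z| : ℝ) := by
    unfold stableExponent
    split_ifs <;> norm_num
  rw [e] at h
  push_cast at h ⊢
  rw [← h]
  congr 1
  funext ω
  congr 1
  ring

/-- The Markov property: conditionally on the past up to `s`, the increment over `[s, t]` is a
Cauchy variable of scale `t - s`. -/
lemma lintegral_markov (hX : IsStableProcess 1 (1 / 2) x₀ P X) {s t : ℝ} (hs : 0 ≤ s) (hst : s < t)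
    {H : Ω → ℝ≥0∞} (hH : Measurable[past X s] H) {F : ℝ → ℝ → ℝ≥0∞}
    (hF : Measurable (Function.uncurry F)) :
    ∫⁻ ω, H ω * F (X s ω) (X t ω - X s ω) ∂P
      = ∫⁻ ω, H ω * ∫⁻ z, F (X s ω) z ∂(cau (t - s)) ∂P := by
  have hm : Measurable fun ω => X t ω - X s ω := (hX.measurable t).sub (hX.measurable s)
  have := isProbabilityMeasure_cau (sub_pos.2 hst)
  have hW' : Measurable[past X s] fun ω => (H ω, X s ω) := hH.prodMk (measurable_past X hs le_rfl)
  have hW : Measurable fun ω => (H ω, X s ω) := hW'.mono (past_le hX s) le_rfl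
  have hind : IndepFun (fun ω => (H ω, X s ω)) (fun ω => X t ω - X s ω) P := by
    rw [IndepFun_iff_Indep]
    exact indep_of_indep_of_le_left (hX.indep s t hs hst.le) hW'.comap_le
  have hmap := (indepFun_iff_map_prod_eq_prod_map_map hW.aemeasurable hm.aemeasurable).mp hind
  rw [map_increment hX hs hst] at hmap
  have hG : Measurable fun p : (ℝ≥0∞ × ℝ) × ℝ => p.1.1 * F p.1.2 p.2 :=
    (measurable_fst.comp measurable_fst).mul
      (hF.comp ((measurable_snd.comp measurable_fst).prodMk measurable_snd))
  calc ∫⁻ ω, H ω * F (X s ω) (X t ω - X s ω) ∂P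
      = ∫⁻ p, p.1.1 * F p.1.2 p.2 ∂(P.map fun ω => ((H ω, X s ω), X t ω - X s ω)) := by
        rw [lintegral_map hG (hW.prodMk hm)]
    _ = ∫⁻ q, ∫⁻ z, q.1 * F q.2 z ∂(cau (t - s)) ∂(P.map fun ω => (H ω, X s ω)) := by
        rw [hmap, lintegral_prod _ hG.aemeasurable]
    _ = ∫⁻ ω, ∫⁻ z, H ω * F (X s ω) z ∂(cau (t - s)) ∂P := by
        rw [lintegral_map hG.lintegral_prod_right' hW]
    _ = _ := by
        congr 1
        funext ω
        exact lintegral_const_mul _ (hF.comp (measurable_const.prodMk measurable_id))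

end

/-! ### Estimates for the Cauchy law -/

lemma cau_apply (h : ℝ) {s : Set ℝ} (hs : MeasurableSet s) :
    cau h s = ∫⁻ z in s, ENNReal.ofReal (cauDens h z) := withDensity_apply _ hs

lemma cau_Ioi_le {h u : ℝ} (hh : 0 < h) (hu : 0 < u) :
    cau h (Ioi u) ≤ ENNReal.ofReal (h / (π * u)) := by
  have hlt : (-2 : ℝ) < -1 := by norm_num
  calc cau h (Ioi u) = ∫⁻ z in Ioi u, ENNReal.ofReal (cauDens h z) := cau_apply h measurableSet_Ioi
    _ ≤ ∫⁻ z in Ioi u, ENNReal.ofReal (h / π * z ^ (-2 : ℝ)) := by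
        refine setLIntegral_mono' measurableSet_Ioi fun z hz => ENNReal.ofReal_le_ofReal ?_
        have hz0 : 0 < z := hu.trans hz
        rw [Real.rpow_neg hz0.le, Real.rpow_two, cauDens, ← div_div, div_eq_mul_inv (h / π)]
        gcongr
        nlinarith [sq_nonneg h]
    _ = ENNReal.ofReal (∫ z in Ioi u, h / π * z ^ (-2 : ℝ)) := by
        rw [ofReal_integral_eq_lintegral_ofReal]
        · exact (integrableOn_Ioi_rpow_of_lt hlt hu).const_mul _
        · refine (ae_restrict_iff' measurableSet_Ioi).2 (ae_of_all _ fun z hz => ?_)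
          have hz0 : 0 < z := hu.trans hz
          simp only [Pi.zero_apply]
          positivity
    _ = ENNReal.ofReal (h / (π * u)) := by
        rw [integral_const_mul, integral_Ioi_rpow_of_lt hlt hu]
        congr 1
        have : (-2 : ℝ) + 1 = -1 := by norm_num
        rw [this, Real.rpow_neg_one]
        field_simp

lemma le_cau_Ioi {h u : ℝ} (hh : 0 < h) (hu : h ≤ u) :
    ENNReal.ofReal (h / (5 * π * u)) ≤ cau h (Ioi u) := by
  have hu0 : 0 < u := hh.trans_le hu
  calc ENNReal.ofReal (h / (5 * π * u))
      = ∫⁻ _ in Ioc u (2 * u), ENNReal.ofReal (h / (5 * π * u ^ 2)) := by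
        rw [setLIntegral_const, Real.volume_Ioc, ← ENNReal.ofReal_mul (by positivity)]
        congr 1
        field_simp
        ring
    _ ≤ ∫⁻ z in Ioc u (2 * u), ENNReal.ofReal (cauDens h z) := by
        refine setLIntegral_mono' measurableSet_Ioc fun z hz => ENNReal.ofReal_le_ofReal ?_
        unfold cauDens
        have hz0 : 0 < z := hu0.trans hz.1
        refine div_le_div_of_nonneg_left hh.le (by positivity) ?_
        have h1 : z ^ 2 ≤ (2 * u) ^ 2 := pow_le_pow_left₀ hz0.le hz.2 2
        have h2 : h ^ 2 ≤ u ^ 2 := pow_le_pow_left₀ hh.le hu 2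
        nlinarith [Real.pi_pos]
    _ = cau h (Ioc u (2 * u)) := (cau_apply h measurableSet_Ioc).symm
    _ ≤ _ := measure_mono fun z hz => hz.1

/-- Scaling: the square root of a Cauchy variable of scale `h` has mean of order `√h`. -/
lemma exists_sqrt_moment : ∃ c : ℝ, 0 < c ∧ ∀ h : ℝ, 0 < h →
    ∫⁻ z, ENNReal.ofReal (√|z|) ∂(cau h) ≤ ENNReal.ofReal (c * √h) := by
  have hmeas : Measurable fun z : ℝ => ENNReal.ofReal (√|z|) := by fun_prop
  have hfin : ∫⁻ z, ENNReal.ofReal (√|z|) ∂(cau 1) ≠ ⊤ := by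
    rw [lintegral_cau 1 hmeas]
    have h_int : Integrable fun z : ℝ => (1 + ‖z‖ ^ 2) ^ (-(3 / 2 : ℝ) / 2) :=
      integrable_rpow_neg_one_add_norm_sq (by simp; norm_num)
    refine ((lintegral_mono fun z => ?_).trans_lt h_int.lintegral_lt_top).ne
    rw [← ENNReal.ofReal_mul (cauDens_nonneg one_pos z)]
    refine ENNReal.ofReal_le_ofReal ?_
    have hp : 0 < 1 + z ^ 2 := by positivity
    have e1 : √|z| ≤ (1 + z ^ 2) ^ (1 / 4 : ℝ) := by
      rw [Real.sqrt_le_left (by positivity), ← Real.rpow_natCast, ← Real.rpow_mul hp.le]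
      norm_num
      rw [← Real.sqrt_eq_rpow]
      exact Real.abs_le_sqrt (by linarith)
    have e2 : cauDens 1 z ≤ (1 + z ^ 2) ^ (-1 : ℝ) := by
      rw [Real.rpow_neg_one, cauDens, one_pow, ← one_div]
      refine one_div_le_one_div_of_le hp ?_
      nlinarith [Real.pi_gt_three]
    calc cauDens 1 z * √|z| ≤ (1 + z ^ 2) ^ (-1 : ℝ) * (1 + z ^ 2) ^ (1 / 4 : ℝ) := by
          gcongr
      _ = _ := by
          rw [← Real.rpow_add hp, Real.norm_eq_abs, sq_abs]
          norm_num
  refine ⟨(∫⁻ z, ENNReal.ofReal (√|z|) ∂(cau 1)).toReal + 1, by positivity, fun h hh => ?_⟩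
  have := isProbabilityMeasure_cau hh
  have := isProbabilityMeasure_cau one_pos
  have hm : Measurable fun z : ℝ => h * z := by fun_prop
  have hmap : (cau 1).map (fun z => h * z) = cau h := by
    have := Measure.isProbabilityMeasure_map (μ := cau 1) hm.aemeasurable
    refine Measure.ext_of_charFun (funext fun t => ?_)
    rw [charFun_map_mul, charFun_cau hh, charFun_cau one_pos, abs_mul, abs_of_pos hh, one_mul]
  rw [← hmap, lintegral_map hmeas hm]
  have e : ∀ z : ℝ, ENNReal.ofReal (√|h * z|) = ENNReal.ofReal (√h) * ENNReal.ofReal (√|z|) := by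
    intro z
    rw [abs_mul, abs_of_pos hh, Real.sqrt_mul hh.le, ENNReal.ofReal_mul (Real.sqrt_nonneg h)]
  simp_rw [e]
  rw [lintegral_const_mul _ hmeas, mul_comm, ENNReal.ofReal_mul (by positivity)]
  gcongr
  rw [ENNReal.ofReal_add (by positivity) zero_le_one, ENNReal.ofReal_toReal hfin]
  exact le_self_add

/-- Conditional probability, given the position `x` at the beginning of a time step `h`, to be
below `-d` at the beginning of that step and above `d` at its end. -/
noncomputable def crossProb (h d x : ℝ) : ℝ≥0∞ :=
  (Iio (-d)).indicator (fun x => cau h (Ioi (d - x))) x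

lemma measurable_crossProb (h d : ℝ) : Measurable (crossProb h d) := by
  refine Measurable.indicator ?_ measurableSet_Iio
  refine Monotone.measurable fun x y hxy => measure_mono fun z hz => ?_
  simp only [mem_Ioi] at hz ⊢
  linarith

/-- A particle started at distance at most `R * T` from the origin crosses `[-δ * T, δ * T]`
during the time step of length `h` that follows a time `τ ∈ [T, 2 * T]` with probability at least a
multiple of `h / T`; the factor diverges logarithmically as `δ → 0`, because the Lévy density
`z⁻²` makes the crossing rate from a point `x < 0` of order `|x|⁻¹`. -/
lemma le_lintegral_crossProb {T R τ δ h y : ℝ} (hT : 0 < T) (hR : 0 < R) (hy : |y| ≤ R * T)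
    (hτ1 : T ≤ τ) (hτ2 : τ ≤ 2 * T) (hδ : 0 < δ) (hδ1 : δ < 1) (hh : 0 < h) (hhδ : h ≤ δ * T) :
    ENNReal.ofReal (h / T * (Real.log (1 / (2 * δ)) / (5 * π ^ 2 * (4 + (R + 1) ^ 2))))
      ≤ ∫⁻ z, crossProb h (δ * T) (y + z) ∂(cau τ) := by
  have hτ : 0 < τ := hT.trans_le hτ1
  set c : ℝ := 1 / (T * (π * (4 + (R + 1) ^ 2))) with hc
  have hc0 : 0 < c := by positivity
  have hdT : 0 < δ * T := by positivity
  have hle : -T ≤ -(δ * T) := by nlinarith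
  have hinv : ∀ x ∈ Icc (-T) (-(δ * T)), 0 < δ * T - x := fun x hx => by linarith [hx.2]
  have hII : IntervalIntegrable (fun x => c * (h / (5 * π)) * (δ * T - x)⁻¹) volume
      (-T) (-(δ * T)) := by
    refine ContinuousOn.intervalIntegrable ?_
    rw [uIcc_of_le hle]
    exact continuousOn_const.mul ((continuousOn_const.sub continuousOn_id).inv₀
      fun x hx => (hinv x hx).ne')
  calc ENNReal.ofReal (h / T * (Real.log (1 / (2 * δ)) / (5 * π ^ 2 * (4 + (R + 1) ^ 2))))
      ≤ ENNReal.ofReal (∫ x in (-T)..(-(δ * T)), c * (h / (5 * π)) * (δ * T - x)⁻¹) := by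
        refine ENNReal.ofReal_le_ofReal ?_
        rw [intervalIntegral.integral_const_mul,
          intervalIntegral.integral_comp_sub_left (fun x => x⁻¹),
          integral_inv_of_pos (by linarith) (by linarith)]
        have e : h / T * (Real.log (1 / (2 * δ)) / (5 * π ^ 2 * (4 + (R + 1) ^ 2)))
            = c * (h / (5 * π)) * Real.log (1 / (2 * δ)) := by
          rw [hc]; field_simp
        rw [e]
        refine mul_le_mul_of_nonneg_left (Real.log_le_log (by positivity) ?_) (by positivity)
        rw [div_le_div_iff₀ (by positivity) (by linarith)]
        nlinarith [mul_pos hδ hdT]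
    _ = ∫⁻ x in Ioc (-T) (-(δ * T)), ENNReal.ofReal (c * (h / (5 * π)) * (δ * T - x)⁻¹) := by
        rw [intervalIntegral.integral_of_le hle, ofReal_integral_eq_lintegral_ofReal hII.1]
        refine (ae_restrict_iff' measurableSet_Ioc).2 (ae_of_all _ fun x hx => ?_)
        have := hinv x ⟨hx.1.le, hx.2⟩
        simp only [Pi.zero_apply]
        positivity
    _ = ∫⁻ x in Ioo (-T) (-(δ * T)), ENNReal.ofReal (c * (h / (5 * π)) * (δ * T - x)⁻¹) := by
        rw [Measure.restrict_congr_set Ioo_ae_eq_Ioc]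
    _ ≤ ∫⁻ x in Ioo (-T) (-(δ * T)),
          ENNReal.ofReal (cauDens τ (x - y)) * crossProb h (δ * T) x := by
        refine setLIntegral_mono' measurableSet_Ioo fun x hx => ?_
        have hpos := hinv x ⟨hx.1.le, hx.2.le⟩
        have e : c * (h / (5 * π)) * (δ * T - x)⁻¹ = c * (h / (5 * π * (δ * T - x))) := by
          field_simp
        rw [e, ENNReal.ofReal_mul hc0.le]
        gcongr
        · rw [hc, cauDens, div_le_div_iff₀ (by positivity) (by positivity)]
          have h1 : |x - y| ≤ (R + 1) * T := by
            rw [abs_le] at hy ⊢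
            constructor <;> linarith [hx.1, hx.2]
          have h2 : (x - y) ^ 2 ≤ ((R + 1) * T) ^ 2 := by
            rw [← sq_abs]
            exact pow_le_pow_left₀ (abs_nonneg _) h1 2
          have h3 : τ ^ 2 ≤ (2 * T) ^ 2 := pow_le_pow_left₀ hτ.le hτ2 2
          calc 1 * (π * (τ ^ 2 + (x - y) ^ 2))
              ≤ 1 * (π * ((2 * T) ^ 2 + ((R + 1) * T) ^ 2)) := by gcongr
            _ = T * (T * (π * (4 + (R + 1) ^ 2))) := by ring
            _ ≤ τ * (T * (π * (4 + (R + 1) ^ 2))) := by gcongr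
        · rw [crossProb, indicator_of_mem (show x ∈ Iio (-(δ * T)) from hx.2)]
          exact le_cau_Ioi hh (by linarith [hx.2])
    _ ≤ ∫⁻ x, ENNReal.ofReal (cauDens τ (x - y)) * crossProb h (δ * T) x :=
        setLIntegral_le_lintegral _ _
    _ = ∫⁻ z, ENNReal.ofReal (cauDens τ z) * crossProb h (δ * T) (y + z) := by
        rw [← lintegral_add_left_eq_self _ y]
        simp
    _ = _ := by
        rw [lintegral_cau]
        exact (measurable_crossProb _ _).comp (measurable_const_add y)

/-! ### Upcrossings in one block -/

/-- The `i`-th point of the grid with mesh `T / m` on `[2 * T, 3 * T]`. -/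
noncomputable def gridTime (T : ℝ) (m i : ℕ) : ℝ := T * (2 + i / m)

/-- The number of steps of the grid with mesh `T / m` on `[2 * T, 3 * T]` over which the path goes
from below `-δ * T` to above `δ * T`. -/
noncomputable def crossCount {Ω : Type*} (X : ℝ → Ω → ℝ) (T δ : ℝ) (m : ℕ) (ω : Ω) : ℕ := by
  classical
  exact ((Finset.range m).filter fun i =>
    X (gridTime T m i) ω < -(δ * T) ∧ δ * T < X (gridTime T m (i + 1)) ω).card

/-- A lower limit, along refining grids, of `exp (-l * crossCount)`. It dominates
`exp (-l * U)`, where `U` is the number of upcrossings in `(2 * T, 3 * T]`, and unlike `U` it is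
visibly measurable. -/
noncomputable def blockWeight {Ω : Type*} (X : ℝ → Ω → ℝ) (T δ l : ℝ) (ω : Ω) : ℝ≥0∞ :=
  liminf (fun m : ℕ => ENNReal.ofReal (Real.exp (-(l * crossCount X T δ m ω)))) atTop

lemma gridTime_succ_sub {T : ℝ} {m : ℕ} (i : ℕ) :
    gridTime T m (i + 1) - gridTime T m i = T / m := by
  unfold gridTime; push_cast; ring

lemma gridTime_lt_succ {T : ℝ} (hT : 0 < T) {m : ℕ} (hm : 0 < m) (i : ℕ) :
    gridTime T m i < gridTime T m (i + 1) := by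
  have := gridTime_succ_sub (T := T) (m := m) i
  have h : 0 < T / m := by positivity
  linarith

lemma gridTime_mono {T : ℝ} (hT : 0 < T) {m i j : ℕ} (h : i ≤ j) :
    gridTime T m i ≤ gridTime T m j := by
  unfold gridTime
  gcongr

lemma two_mul_le_gridTime {T : ℝ} (hT : 0 < T) (m i : ℕ) : 2 * T ≤ gridTime T m i := by
  unfold gridTime
  have : (0 : ℝ) ≤ i / m := by positivity
  nlinarith

lemma gridTime_le {T : ℝ} (hT : 0 < T) {m i : ℕ} (h : i ≤ m) : gridTime T m i ≤ 3 * T := by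
  unfold gridTime
  have : (i / m : ℝ) ≤ 1 := div_le_one_of_le₀ (by exact_mod_cast h) (by positivity)
  nlinarith

lemma measurable_crossCount {Ω : Type*} (X : ℝ → Ω → ℝ) {T : ℝ} (hT : 0 < T) (δ : ℝ) (m : ℕ)
    {t : ℝ} (ht : 3 * T ≤ t) : Measurable[past X t] (crossCount X T δ m) := by
  classical
  have e : crossCount X T δ m = fun ω => ∑ i ∈ Finset.range m,
      if X (gridTime T m i) ω < -(δ * T) ∧ δ * T < X (gridTime T m (i + 1)) ω then 1 else 0 := by
    funext ω
    rw [crossCount, Finset.card_filter]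
  rw [e]
  refine Finset.measurable_fun_sum _ fun i hi => ?_
  have hi' : i + 1 ≤ m := Finset.mem_range.1 hi
  have h0 : ∀ j, 0 ≤ gridTime T m j := fun j => by
    have := two_mul_le_gridTime hT m j; linarith
  have m1 := measurable_past X (h0 i) ((gridTime_le hT (Nat.le_of_succ_le hi')).trans ht)
  have m2 := measurable_past X (h0 (i + 1)) ((gridTime_le hT hi').trans ht)
  exact Measurable.ite ((m1 measurableSet_Iio).inter (m2 measurableSet_Ioi))
    measurable_const measurable_const

lemma measurable_blockWeight {Ω : Type*} (X : ℝ → Ω → ℝ) {T : ℝ} (hT : 0 < T) (δ l : ℝ)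
    {t : ℝ} (ht : 3 * T ≤ t) : Measurable[past X t] (blockWeight X T δ l) := by
  refine Measurable.liminf fun m => ?_
  have h : Measurable fun n : ℕ => ENNReal.ofReal (Real.exp (-(l * n))) := measurable_from_top
  exact h.comp (measurable_crossCount X hT δ m ht)

lemma blockWeight_le_one {Ω : Type*} (X : ℝ → Ω → ℝ) (T δ : ℝ) {l : ℝ} (hl : 0 ≤ l) (ω : Ω) :
    blockWeight X T δ l ω ≤ 1 := by
  refine liminf_le_of_frequently_le' (Frequently.of_forall fun m => ?_)
  rw [← ENNReal.ofReal_one]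
  refine ENNReal.ofReal_le_ofReal (Real.exp_le_one_iff.2 ?_)
  have : 0 ≤ l * crossCount X T δ m ω := by positivity
  linarith

/-- Second-order upper bound for `exp (-l * n)`, with all terms on the nonnegative side. -/
lemma exp_neg_add_le {l : ℝ} (hl : 0 ≤ l) (n : ℕ) :
    ENNReal.ofReal (Real.exp (-(l * n))) + ENNReal.ofReal l * n
      ≤ 1 + ENNReal.ofReal (l ^ 2) * (n : ℝ≥0∞) ^ 2 := by
  have hx : 0 ≤ l * n := by positivity
  have key : Real.exp (-(l * n)) + l * n ≤ 1 + l ^ 2 * (n : ℝ) ^ 2 := by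
    rcases le_total (l * n) 1 with h | h
    · have h1 := Real.abs_exp_sub_one_sub_id_le (x := -(l * n)) (by rwa [abs_neg, abs_of_nonneg hx])
      have h2 := (abs_le.1 h1).2
      nlinarith
    · have : Real.exp (-(l * n)) ≤ 1 := Real.exp_le_one_iff.2 (by linarith)
      nlinarith
  have h := ENNReal.ofReal_le_ofReal key
  rw [ENNReal.ofReal_add (Real.exp_pos _).le hx, ENNReal.ofReal_add zero_le_one (by positivity),
    ENNReal.ofReal_mul hl, ENNReal.ofReal_mul (by positivity), ENNReal.ofReal_one,
    ENNReal.ofReal_pow (by positivity : (0 : ℝ) ≤ (n : ℝ)), ENNReal.ofReal_natCast] at h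
  exact h

section
variable {Ω : Type*} [mΩ : MeasurableSpace Ω] {P : Measure Ω} [IsProbabilityMeasure P]
  {x₀ : ℝ} {X : ℝ → Ω → ℝ}

lemma lintegral_increment_le (hX : IsStableProcess 1 (1 / 2) x₀ P X) {s t d : ℝ} (hs : 0 ≤ s)
    (hst : s < t) (hd : 0 < d) {H : Ω → ℝ≥0∞} (hH : Measurable[past X s] H) :
    ∫⁻ ω, H ω * (Ioi d).indicator 1 (X t ω - X s ω) ∂P
      ≤ ENNReal.ofReal ((t - s) / (π * d)) * ∫⁻ ω, H ω ∂P := by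
  have hF : Measurable (Function.uncurry fun _ z : ℝ => (Ioi d).indicator (1 : ℝ → ℝ≥0∞) z) :=
    (measurable_one.indicator measurableSet_Ioi).comp measurable_snd
  rw [lintegral_markov hX hs hst hH hF, ← lintegral_const_mul _ (hH.mono (past_le hX s) le_rfl)]
  refine lintegral_mono fun ω => ?_
  rw [lintegral_indicator_one measurableSet_Ioi, mul_comm]
  gcongr
  exact cau_Ioi_le (sub_pos.2 hst) hd

/-- Lower bound for the probability of crossing the strip `[-δ * T, δ * T]` between the times `s` and
`t` of a block, on events of the past up to time `T`. -/
lemma le_lintegral_cross (hX : IsStableProcess 1 (1 / 2) x₀ P X) {T R δ s t : ℝ} (hT : 0 < T)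
    (hR : 0 < R) (hδ : 0 < δ) (hδ1 : δ < 1) (hs1 : 2 * T ≤ s) (hs2 : s ≤ 3 * T) (hst : s < t)
    (ht : t - s ≤ δ * T)
    {H : Ω → ℝ≥0∞} (hH : Measurable[past X T] H) (hsupp : ∀ ω, H ω ≠ 0 → |X T ω| ≤ R * T) :
    ENNReal.ofReal ((t - s) / T * (Real.log (1 / (2 * δ)) / (5 * π ^ 2 * (4 + (R + 1) ^ 2))))
        * ∫⁻ ω, H ω ∂P
      ≤ ∫⁻ ω, H ω * ((Iio (-(δ * T))).indicator 1 (X s ω) * (Ioi (δ * T)).indicator 1 (X t ω)) ∂P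
      := by
  have hs0 : 0 ≤ s := by linarith
  have hTs : T < s := by linarith
  -- the Markov property at time `s` turns the crossing event into `crossProb`
  have hF : Measurable (Function.uncurry fun x z : ℝ =>
      (Ioi (δ * T)).indicator (1 : ℝ → ℝ≥0∞) (x + z)) :=
    (measurable_one.indicator measurableSet_Ioi).comp (measurable_fst.add measurable_snd)
  have hH' : Measurable[past X s] fun ω =>
      H ω * (Iio (-(δ * T))).indicator (1 : ℝ → ℝ≥0∞) (X s ω) := by
    refine Measurable.mul (hH.mono (past_mono X hTs.le) le_rfl) ?_
    exact (measurable_one.indicator measurableSet_Iio).comp (measurable_past X hs0 le_rfl)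
  have e1 : ∫⁻ ω, H ω * ((Iio (-(δ * T))).indicator 1 (X s ω) *
        (Ioi (δ * T)).indicator 1 (X t ω)) ∂P
      = ∫⁻ ω, H ω * crossProb (t - s) (δ * T) (X s ω) ∂P := by
    have := lintegral_markov hX hs0 hst hH' hF
    calc _ = ∫⁻ ω, (H ω * (Iio (-(δ * T))).indicator (1 : ℝ → ℝ≥0∞) (X s ω)) *
          (Ioi (δ * T)).indicator (1 : ℝ → ℝ≥0∞) (X s ω + (X t ω - X s ω)) ∂P := by
          congr 1
          funext ω
          rw [mul_assoc, add_sub_cancel]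
      _ = _ := this
      _ = _ := by
          congr 1
          funext ω
          rw [mul_assoc]
          congr 1
          have e : (fun z => (Ioi (δ * T)).indicator (1 : ℝ → ℝ≥0∞) (X s ω + z))
              = (Ioi (δ * T - X s ω)).indicator 1 := by
            funext z
            simp only [indicator, mem_Ioi, sub_lt_iff_lt_add', Pi.one_apply]
          rw [e, lintegral_indicator_one measurableSet_Ioi, crossProb]
          by_cases hx : X s ω ∈ Iio (-(δ * T))
          · rw [indicator_of_mem hx, indicator_of_mem hx]; simp
          · rw [indicator_of_notMem hx, indicator_of_notMem hx]; simp
  -- the Markov property at time `T` averages `crossProb` over the position at time `s`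
  have hF2 : Measurable (Function.uncurry fun x z : ℝ => crossProb (t - s) (δ * T) (x + z)) :=
    (measurable_crossProb _ _).comp (measurable_fst.add measurable_snd)
  have e2 := lintegral_markov hX hT.le hTs hH hF2
  simp only [add_sub_cancel] at e2
  rw [e1, e2, ← lintegral_const_mul _ (hH.mono (past_le hX T) le_rfl)]
  refine lintegral_mono fun ω => ?_
  by_cases h0 : H ω = 0
  · simp [h0]
  · rw [mul_comm]
    gcongr
    exact le_lintegral_crossProb hT hR (hsupp ω h0) (by linarith) (by linarith) hδ hδ1
      (sub_pos.2 hst) ht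

end

lemma crossCount_cast {Ω : Type*} (X : ℝ → Ω → ℝ) (T δ : ℝ) (m : ℕ) (ω : Ω) :
    (crossCount X T δ m ω : ℝ≥0∞) = ∑ i ∈ Finset.range m,
      (Iio (-(δ * T))).indicator 1 (X (gridTime T m i) ω) *
        (Ioi (δ * T)).indicator 1 (X (gridTime T m (i + 1)) ω) := by
  classical
  rw [crossCount, Finset.card_filter, Nat.cast_sum]
  refine Finset.sum_congr rfl fun i _ => ?_
  by_cases h1 : X (gridTime T m i) ω < -(δ * T) <;>
    by_cases h2 : δ * T < X (gridTime T m (i + 1)) ω <;> simp [h1, h2]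

section
variable {Ω : Type*} [mΩ : MeasurableSpace Ω] {P : Measure Ω} [IsProbabilityMeasure P]
  {x₀ : ℝ} {X : ℝ → Ω → ℝ}

/-- The first moment of the number of grid crossings grows like `log (1 / δ)`, uniformly in `m`. -/
lemma le_lintegral_crossCount (hX : IsStableProcess 1 (1 / 2) x₀ P X) {T R δ : ℝ} (hT : 0 < T)
    (hR : 0 < R) (hδ : 0 < δ) (hδ1 : δ < 1) {m : ℕ} (hm : 1 / δ ≤ m)
    {H : Ω → ℝ≥0∞} (hH : Measurable[past X T] H) (hsupp : ∀ ω, H ω ≠ 0 → |X T ω| ≤ R * T) :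
    ENNReal.ofReal (Real.log (1 / (2 * δ)) / (5 * π ^ 2 * (4 + (R + 1) ^ 2))) * ∫⁻ ω, H ω ∂P
      ≤ ∫⁻ ω, H ω * crossCount X T δ m ω ∂P := by
  have hm0 : (0 : ℝ) < m := (by positivity : 0 < 1 / δ).trans_le hm
  have hm0' : 0 < m := by exact_mod_cast hm0
  have hHm : Measurable H := hH.mono (past_le hX T) le_rfl
  have hmeas : ∀ i, Measurable fun ω => H ω *
      ((Iio (-(δ * T))).indicator (1 : ℝ → ℝ≥0∞) (X (gridTime T m i) ω) *
        (Ioi (δ * T)).indicator (1 : ℝ → ℝ≥0∞) (X (gridTime T m (i + 1)) ω)) := fun i =>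
    hHm.mul (((measurable_one.indicator measurableSet_Iio).comp (hX.measurable _)).mul
      ((measurable_one.indicator measurableSet_Ioi).comp (hX.measurable _)))
  simp_rw [crossCount_cast, Finset.mul_sum]
  rw [lintegral_finsetSum _ fun i _ => hmeas i]
  set L := Real.log (1 / (2 * δ)) / (5 * π ^ 2 * (4 + (R + 1) ^ 2)) with hL
  calc ENNReal.ofReal L * ∫⁻ ω, H ω ∂P
      = ∑ i ∈ Finset.range m, ENNReal.ofReal (T / m / T * L) * ∫⁻ ω, H ω ∂P := by
        rw [Finset.sum_const, Finset.card_range, nsmul_eq_mul, ← mul_assoc,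
          ← ENNReal.ofReal_natCast, ← ENNReal.ofReal_mul hm0.le]
        congr 2
        field_simp
    _ ≤ _ := by
        refine Finset.sum_le_sum fun i hi => ?_
        have hi' : i ≤ m := (Finset.mem_range.1 hi).le
        rw [← gridTime_succ_sub i]
        refine le_lintegral_cross hX hT hR hδ hδ1 (two_mul_le_gridTime hT m i)
          (gridTime_le hT hi') (gridTime_lt_succ hT hm0' i) ?_ hH hsupp
        rw [gridTime_succ_sub, div_le_iff₀ hm0]
        rw [div_le_iff₀ hδ] at hm
        nlinarith

/-- Distinct grid increments are jointly large with at most the product of the probabilities. -/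
lemma lintegral_two_increments_le (hX : IsStableProcess 1 (1 / 2) x₀ P X) {T d : ℝ} (hT : 0 < T)
    (hd : 0 < d) {m : ℕ} (hm : 0 < m) {i j : ℕ} (hij : i < j)
    {H : Ω → ℝ≥0∞} (hH : Measurable[past X T] H) :
    ∫⁻ ω, H ω * ((Ioi d).indicator 1 (X (gridTime T m (i + 1)) ω - X (gridTime T m i) ω) *
        (Ioi d).indicator 1 (X (gridTime T m (j + 1)) ω - X (gridTime T m j) ω)) ∂P
      ≤ ENNReal.ofReal (T / m / (π * d)) ^ 2 * ∫⁻ ω, H ω ∂P := by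
  have h0 : ∀ k, T ≤ gridTime T m k := fun k => by
    have := two_mul_le_gridTime hT m k; linarith
  have hH' : Measurable[past X (gridTime T m j)] fun ω =>
      H ω * (Ioi d).indicator (1 : ℝ → ℝ≥0∞) (X (gridTime T m (i + 1)) ω - X (gridTime T m i) ω) := by
    refine (hH.mono (past_mono X (h0 j)) le_rfl).mul
      ((measurable_one.indicator measurableSet_Ioi).comp (Measurable.sub ?_ ?_))
    · exact measurable_past X (hT.le.trans (h0 _)) (gridTime_mono hT hij)
    · exact measurable_past X (hT.le.trans (h0 _)) (gridTime_mono hT hij.le)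
  have h1 := lintegral_increment_le hX (hT.le.trans (h0 j)) (gridTime_lt_succ hT hm j) hd hH'
  have h2 := lintegral_increment_le hX (hT.le.trans (h0 i)) (gridTime_lt_succ hT hm i) hd
    (hH.mono (past_mono X (h0 i)) le_rfl)
  rw [gridTime_succ_sub] at h1 h2
  simp_rw [← mul_assoc]
  refine h1.trans ?_
  rw [sq, mul_assoc]
  gcongr

/-- The second moment of the number of grid crossings is bounded uniformly in `m`: each crossing
requires an increment larger than `2 * δ * T`, and these are independent. -/
lemma lintegral_crossCount_sq_le (hX : IsStableProcess 1 (1 / 2) x₀ P X) {T δ : ℝ} (hT : 0 < T)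
    (hδ : 0 < δ) {m : ℕ} (hm : 0 < m) {H : Ω → ℝ≥0∞} (hH : Measurable[past X T] H) :
    ∫⁻ ω, H ω * (crossCount X T δ m ω : ℝ≥0∞) ^ 2 ∂P
      ≤ ENNReal.ofReal (1 / (2 * π * δ) + (1 / (2 * π * δ)) ^ 2) * ∫⁻ ω, H ω ∂P := by
  set D : ℕ → Ω → ℝ≥0∞ := fun i ω =>
    (Ioi (2 * (δ * T))).indicator 1 (X (gridTime T m (i + 1)) ω - X (gridTime T m i) ω) with hD
  have hd : 0 < 2 * (δ * T) := by positivity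
  have hHm : Measurable H := hH.mono (past_le hX T) le_rfl
  have hDm : ∀ i, Measurable (D i) := fun i =>
    (measurable_one.indicator measurableSet_Ioi).comp ((hX.measurable _).sub (hX.measurable _))
  have hle : ∀ ω, (crossCount X T δ m ω : ℝ≥0∞) ≤ ∑ i ∈ Finset.range m, D i ω := by
    intro ω
    rw [crossCount_cast]
    refine Finset.sum_le_sum fun i _ => ?_
    by_cases h1 : X (gridTime T m i) ω < -(δ * T)
    · by_cases h2 : δ * T < X (gridTime T m (i + 1)) ω
      · have : 2 * (δ * T) < X (gridTime T m (i + 1)) ω - X (gridTime T m i) ω := by linarith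
        simp [h1, h2, hD, this]
      · simp [h2]
    · simp [h1]
  set q : ℝ := T / m / (π * (2 * (δ * T))) with hq
  have hq0 : 0 ≤ q := by positivity
  have hDD : ∀ i j, ∫⁻ ω, H ω * (D i ω * D j ω) ∂P
      ≤ ENNReal.ofReal (q ^ 2 + if i = j then q else 0) * ∫⁻ ω, H ω ∂P := by
    intro i j
    rcases lt_trichotomy i j with h | h | h
    · rw [if_neg h.ne, add_zero, ENNReal.ofReal_pow hq0]
      exact lintegral_two_increments_le hX hT hd hm h hH
    · subst h
      have h0 : T ≤ gridTime T m i := by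
        have := two_mul_le_gridTime hT m i; linarith
      have := lintegral_increment_le hX (hT.le.trans h0) (gridTime_lt_succ hT hm i) hd
        (hH.mono (past_mono X h0) le_rfl)
      rw [gridTime_succ_sub] at this
      have e : ∀ ω, D i ω * D i ω = D i ω := by
        intro ω
        simp only [hD, indicator]
        split_ifs <;> simp
      simp_rw [e, if_true]
      refine this.trans ?_
      gcongr
      nlinarith
    · rw [if_neg h.ne', add_zero, ENNReal.ofReal_pow hq0]
      simp_rw [mul_comm (D i _)]
      exact lintegral_two_increments_le hX hT hd hm h hH
  calc ∫⁻ ω, H ω * (crossCount X T δ m ω : ℝ≥0∞) ^ 2 ∂P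
      ≤ ∫⁻ ω, ∑ i ∈ Finset.range m, ∑ j ∈ Finset.range m, H ω * (D i ω * D j ω) ∂P := by
        refine lintegral_mono fun ω => ?_
        simp_rw [← Finset.mul_sum]
        rw [← Finset.sum_mul, sq]
        gcongr <;> exact hle ω
    _ = ∑ i ∈ Finset.range m, ∑ j ∈ Finset.range m, ∫⁻ ω, H ω * (D i ω * D j ω) ∂P := by
        have hm2 : ∀ i j, Measurable fun ω => H ω * (D i ω * D j ω) := fun i j =>
          hHm.mul ((hDm i).mul (hDm j))
        rw [lintegral_finsetSum _ fun i _ => Finset.measurable_fun_sum _ fun j _ => hm2 i j]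
        refine Finset.sum_congr rfl fun i _ => ?_
        rw [lintegral_finsetSum _ fun j _ => hm2 i j]
    _ ≤ ∑ i ∈ Finset.range m, ∑ j ∈ Finset.range m,
          ENNReal.ofReal (q ^ 2 + if i = j then q else 0) * ∫⁻ ω, H ω ∂P :=
        Finset.sum_le_sum fun i _ => Finset.sum_le_sum fun j _ => hDD i j
    _ = ENNReal.ofReal (∑ i ∈ Finset.range m, ∑ j ∈ Finset.range m,
          (q ^ 2 + if i = j then q else 0)) * ∫⁻ ω, H ω ∂P := by
        have hp : ∀ i j : ℕ, 0 ≤ q ^ 2 + if i = j then q else 0 := fun i j => by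
          split_ifs <;> positivity
        rw [ENNReal.ofReal_sum_of_nonneg fun i _ => Finset.sum_nonneg fun j _ => hp i j,
          Finset.sum_mul]
        refine Finset.sum_congr rfl fun i _ => ?_
        rw [ENNReal.ofReal_sum_of_nonneg fun j _ => hp i j, Finset.sum_mul]
    _ = _ := by
        congr 2
        have e : ∀ i ∈ Finset.range m, ∑ j ∈ Finset.range m, (q ^ 2 + if i = j then q else 0)
            = m * q ^ 2 + q := by
          intro i hi
          rw [Finset.sum_add_distrib, Finset.sum_ite_eq, if_pos hi]
          simp
        rw [Finset.sum_congr rfl e]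
        simp only [Finset.sum_const, Finset.card_range, nsmul_eq_mul]
        have hm0 : (0 : ℝ) < m := by exact_mod_cast hm
        have : m * q = 1 / (2 * π * δ) := by rw [hq]; field_simp
        rw [← this]
        ring

/-- The parameters of a block can be chosen so that, from a position at distance at most `R * T` at
time `T`, the number of upcrossings during `(2 * T, 3 * T]` behaves for the purpose of an
exponential moment as if its conditional mean were at least `2 * M`, with `M` arbitrarily large. -/
lemma exists_block (hX : IsStableProcess 1 (1 / 2) x₀ P X) {R M : ℝ} (hR : 0 < R) (hM : 0 < M) :
    ∃ δ l : ℝ, 0 < δ ∧ 0 < l ∧ l * M ≤ 1 / 8 ∧ ∀ T : ℝ, 0 < T → ∀ H : Ω → ℝ≥0∞,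
      Measurable[past X T] H → (∀ ω, H ω ≠ 0 → |X T ω| ≤ R * T) → ∫⁻ ω, H ω ∂P ≠ ⊤ →
      ∫⁻ ω, H ω * blockWeight X T δ l ω ∂P
        ≤ ENNReal.ofReal (1 - 2 * (l * M)) * ∫⁻ ω, H ω ∂P := by
  set K : ℝ := 5 * π ^ 2 * (4 + (R + 1) ^ 2) with hK
  have hK0 : 0 < K := by positivity
  -- with this `δ` the expected number of grid crossings is at least `3 * M`
  set δ : ℝ := Real.exp (-(3 * M * K)) / 2 with hδ
  have hδ0 : 0 < δ := by positivity
  have hδ1 : δ < 1 := by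
    have : Real.exp (-(3 * M * K)) ≤ 1 := Real.exp_le_one_iff.2 (by
      have : 0 < M * K := by positivity
      linarith)
    rw [hδ]; linarith
  have hlog : Real.log (1 / (2 * δ)) / K = 3 * M := by
    have : 1 / (2 * δ) = Real.exp (3 * M * K) := by
      rw [hδ, Real.exp_neg]; field_simp
    rw [this, Real.log_exp]
    field_simp
  set b : ℝ := 1 / (2 * π * δ) + (1 / (2 * π * δ)) ^ 2 with hb
  have hb0 : 0 < b := by positivity
  set l : ℝ := min (1 / (8 * M)) (M / b) with hl
  have hl0 : 0 < l := by positivity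
  have hl1 : l * M ≤ 1 / 8 := by
    calc l * M ≤ 1 / (8 * M) * M := by gcongr; exact min_le_left _ _
      _ = 1 / 8 := by field_simp
  have hl2 : l * b ≤ M := by
    calc l * b ≤ M / b * b := by gcongr; exact min_le_right _ _
      _ = M := by field_simp
  refine ⟨δ, l, hδ0, hl0, hl1, fun T hT H hH hsupp hfin => ?_⟩
  have hHm : Measurable H := hH.mono (past_le hX T) le_rfl
  have hCm : ∀ m, Measurable (crossCount X T δ m) := fun m =>
    (measurable_crossCount X hT δ m le_rfl).mono (past_le hX _) le_rfl
  have hexp : ∀ m, Measurable fun ω => ENNReal.ofReal (Real.exp (-(l * crossCount X T δ m ω))) := by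
    intro m
    have h : Measurable fun n : ℕ => ENNReal.ofReal (Real.exp (-(l * n))) := measurable_from_top
    exact h.comp (hCm m)
  have hbound : ∀ m : ℕ, 1 / δ ≤ m →
      ∫⁻ ω, H ω * ENNReal.ofReal (Real.exp (-(l * crossCount X T δ m ω))) ∂P
        ≤ ENNReal.ofReal (1 - 2 * (l * M)) * ∫⁻ ω, H ω ∂P := by
    intro m hm
    have hm0 : (0 : ℝ) < m := (by positivity : 0 < 1 / δ).trans_le hm
    have hm0' : 0 < m := by exact_mod_cast hm0
    have h1 := le_lintegral_crossCount hX hT hR hδ0 hδ1 hm hH hsupp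
    have h2 := lintegral_crossCount_sq_le hX hT hδ0 hm0' hH
    rw [← hK, hlog] at h1
    set I := ∫⁻ ω, H ω ∂P with hI
    set A := ∫⁻ ω, H ω * ENNReal.ofReal (Real.exp (-(l * crossCount X T δ m ω))) ∂P with hA
    have hCm' : Measurable fun ω => (crossCount X T δ m ω : ℝ≥0∞) :=
      (measurable_from_top (f := fun n : ℕ => (n : ℝ≥0∞))).comp (hCm m)
    have h3 : A + ENNReal.ofReal l * ∫⁻ ω, H ω * crossCount X T δ m ω ∂P
        ≤ I + ENNReal.ofReal (l ^ 2) * ∫⁻ ω, H ω * (crossCount X T δ m ω : ℝ≥0∞) ^ 2 ∂P := by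
      have m1 : Measurable fun ω => H ω * (crossCount X T δ m ω : ℝ≥0∞) := hHm.mul hCm'
      have m2 : Measurable fun ω => H ω * (crossCount X T δ m ω : ℝ≥0∞) ^ 2 :=
        hHm.mul (hCm'.pow_const 2)
      have m3 : Measurable fun ω =>
        H ω * ENNReal.ofReal (Real.exp (-(l * crossCount X T δ m ω))) := hHm.mul (hexp m)
      rw [← lintegral_const_mul _ m1, ← lintegral_const_mul _ m2,
        ← lintegral_add_left m3, ← lintegral_add_left hHm]
      refine lintegral_mono fun ω => ?_
      calc _ = H ω * (ENNReal.ofReal (Real.exp (-(l * crossCount X T δ m ω)))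
            + ENNReal.ofReal l * crossCount X T δ m ω) := by ring
        _ ≤ H ω * (1 + ENNReal.ofReal (l ^ 2) * (crossCount X T δ m ω : ℝ≥0∞) ^ 2) := by
            exact mul_le_mul_right (exp_neg_add_le hl0.le _) _
        _ = _ := by ring
    have h4 : A + ENNReal.ofReal (3 * (l * M)) * I ≤ ENNReal.ofReal (1 + l * M) * I := by
      calc A + ENNReal.ofReal (3 * (l * M)) * I
          = A + ENNReal.ofReal l * (ENNReal.ofReal (3 * M) * I) := by
            rw [(mul_assoc (ENNReal.ofReal l) _ _).symm, ← ENNReal.ofReal_mul hl0.le]; ring_nf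
        _ ≤ _ := by gcongr
        _ ≤ _ := h3
        _ ≤ I + ENNReal.ofReal (l ^ 2) * (ENNReal.ofReal b * I) := by gcongr
        _ = ENNReal.ofReal (1 + l * (l * b)) * I := by
            rw [(mul_assoc (ENNReal.ofReal (l ^ 2)) _ _).symm, ← ENNReal.ofReal_mul (by positivity),
              ENNReal.ofReal_add zero_le_one (by positivity), ENNReal.ofReal_one, add_mul, one_mul]
            ring_nf
        _ ≤ _ := by gcongr
    have hlM : 0 < l * M := by positivity
    have h5 : ENNReal.ofReal (1 + l * M) * I
        = ENNReal.ofReal (1 - 2 * (l * M)) * I + ENNReal.ofReal (3 * (l * M)) * I := by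
      rw [← add_mul, ← ENNReal.ofReal_add (by linarith) (by linarith)]
      ring_nf
    rw [h5] at h4
    exact (ENNReal.add_le_add_iff_right (ENNReal.mul_ne_top ENNReal.ofReal_ne_top hfin)).1 h4
  calc ∫⁻ ω, H ω * blockWeight X T δ l ω ∂P
      ≤ ∫⁻ ω, liminf (fun m : ℕ =>
          H ω * ENNReal.ofReal (Real.exp (-(l * crossCount X T δ m ω)))) atTop ∂P := by
        refine lintegral_mono fun ω => ?_
        unfold blockWeight
        refine le_trans ?_ ENNReal.le_liminf_mul
        rw [liminf_const]
    _ ≤ liminf (fun m : ℕ => ∫⁻ ω,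
          H ω * ENNReal.ofReal (Real.exp (-(l * crossCount X T δ m ω))) ∂P) atTop :=
        lintegral_liminf_le fun m => hHm.mul (hexp m)
    _ ≤ _ := by
        refine liminf_le_of_frequently_le' (Eventually.frequently ?_)
        filter_upwards [eventually_ge_atTop ⌈1 / δ⌉₊] with m hm
        exact hbound m (Nat.ceil_le.1 hm)

end

/-! ### Grid crossings are jumps across the origin -/

/-- Near each time, two successive observations `f u < -d` and `f v > d` at nearby times can only be
separated by a jump from the negative to the positive half-line at that very time. -/
lemma exists_ball_crossing {f : ℝ → ℝ} {s d : ℝ} (hd : 0 < d)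
    (hr : ContinuousWithinAt f (Ici s) s) (hl : ∃ l, Tendsto f (𝓝[<] s) (𝓝 l)) :
    ∃ ε > 0, ∀ u v, u ∈ Metric.ball s ε → v ∈ Metric.ball s ε → u < v → f u < -d → d < f v →
      s ∈ Ioc u v ∧ Function.leftLim f s < 0 ∧ 0 < f s := by
  obtain ⟨l, hl⟩ := hl
  have hlim : Function.leftLim f s = l := leftLim_eq_of_tendsto hl
  obtain ⟨ε₁, h₁, H₁⟩ := Metric.continuousWithinAt_iff.1 hr (d / 2) (by positivity)
  obtain ⟨ε₂, h₂, H₂⟩ := Metric.tendsto_nhdsWithin_nhds.1 hl (d / 2) (by positivity)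
  refine ⟨min ε₁ ε₂, lt_min h₁ h₂, fun u v hu hv huv hfu hfv => ?_⟩
  have R : ∀ w ∈ Metric.ball s (min ε₁ ε₂), s ≤ w → |f w - f s| < d / 2 := fun w hw h =>
    H₁ h (lt_of_lt_of_le hw (min_le_left _ _))
  have L : ∀ w ∈ Metric.ball s (min ε₁ ε₂), w < s → |f w - l| < d / 2 := fun w hw h =>
    H₂ h (lt_of_lt_of_le hw (min_le_right _ _))
  rcases le_or_gt s u with h | h
  · have a := abs_lt.1 (R u hu h)
    have b := abs_lt.1 (R v hv (h.trans huv.le))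
    linarith [a.1, a.2, b.1, b.2]
  · have a := abs_lt.1 (L u hu h)
    rcases le_or_gt s v with h' | h'
    · have b := abs_lt.1 (R v hv h')
      refine ⟨⟨h, h'⟩, ?_, ?_⟩ <;> linarith [a.1, a.2, b.1, b.2]
    · have b := abs_lt.1 (L v hv h')
      linarith [a.1, a.2, b.1, b.2]

/-- On a fine enough grid every crossing of the strip `[-δ * T, δ * T]` in a single step contains a
jump upcrossing of the origin. No information on the zero set of the path is needed. -/
lemma eventually_crossCount_le {Ω : Type*} {X : ℝ → Ω → ℝ} {ω : Ω}
    (hr : ∀ t : ℝ, 0 ≤ t → ContinuousWithinAt (fun s => X s ω) (Set.Ici t) t)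
    (hl : ∀ t : ℝ, 0 < t → ∃ l : ℝ, Tendsto (fun s => X s ω) (𝓝[<] t) (𝓝 l))
    {T δ : ℝ} (hT : 0 < T) (hδ : 0 < δ) :
    ∀ᶠ m : ℕ in atTop, (crossCount X T δ m ω : ℕ∞) ≤ upcrossings X (Ioc (2 * T) (3 * T)) ω := by
  classical
  have hd : 0 < δ * T := by positivity
  have key : ∀ s : ℝ, s ∈ Icc (2 * T) (3 * T) → ∃ ε > 0, ∀ u v, u ∈ Metric.ball s ε →
      v ∈ Metric.ball s ε → u < v → X u ω < -(δ * T) → δ * T < X v ω →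
      s ∈ Ioc u v ∧ Function.leftLim (fun u => X u ω) s < 0 ∧ 0 < X s ω := fun s hs =>
    exists_ball_crossing hd (hr s (by linarith [hs.1])) (hl s (by linarith [hs.1]))
  choose! ε hε H using key
  obtain ⟨η, hη, hleb⟩ := lebesgue_number_lemma_of_metric (isCompact_Icc (a := 2 * T) (b := 3 * T))
    (c := fun s : Icc (2 * T) (3 * T) => Metric.ball (s : ℝ) (ε s))
    (fun s => Metric.isOpen_ball)
    (fun s hs => mem_iUnion.2 ⟨⟨s, hs⟩, Metric.mem_ball_self (hε s hs)⟩)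
  filter_upwards [eventually_gt_atTop ⌈T / η⌉₊] with m hm
  have hm1 : T / η < m := Nat.lt_of_ceil_lt hm
  have hm0 : (0 : ℝ) < m := (by positivity : 0 < T / η).trans hm1
  have hm0' : 0 < m := by exact_mod_cast hm0
  have hmesh : T / m < η := by
    rw [div_lt_iff₀ hη] at hm1
    rw [div_lt_iff₀ hm0]; linarith
  set F := (Finset.range m).filter fun i =>
    X (gridTime T m i) ω < -(δ * T) ∧ δ * T < X (gridTime T m (i + 1)) ω with hF
  have ex : ∀ i ∈ F, ∃ s ∈ Ioc (gridTime T m i) (gridTime T m (i + 1)),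
      Function.leftLim (fun u => X u ω) s < 0 ∧ 0 < X s ω := by
    intro i hi
    obtain ⟨hi, hi1, hi2⟩ := Finset.mem_filter.1 hi
    have him : i + 1 ≤ m := Finset.mem_range.1 hi
    obtain ⟨⟨s, hs⟩, hsub⟩ := hleb (gridTime T m i)
      ⟨two_mul_le_gridTime hT m i, gridTime_le hT (Nat.le_of_succ_le him)⟩
    have hlt := gridTime_lt_succ hT hm0' i
    have hd : dist (gridTime T m (i + 1)) (gridTime T m i) < η := by
      rw [Real.dist_eq, gridTime_succ_sub, abs_of_pos (by positivity)]; exact hmesh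
    obtain ⟨h1, h2⟩ := H s hs _ _ (hsub (Metric.mem_ball_self hη)) (hsub hd) hlt hi1 hi2
    exact ⟨s, h1, h2⟩
  choose! g hg hg' using ex
  have hinj : Set.InjOn g (F : Set ℕ) := by
    have aux : ∀ i ∈ F, ∀ j ∈ F, i < j → g i < g j := fun i hi j hj hij =>
      ((hg i hi).2.trans (gridTime_mono hT hij)).trans_lt (hg j hj).1
    intro i hi j hj hij
    rcases lt_trichotomy i j with h | h | h
    · exact absurd hij (aux i hi j hj h).ne
    · exact h
    · exact absurd hij (aux j hj i hi h).ne'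
  have hc : crossCount X T δ m ω = F.card := by
    rw [crossCount, hF]
  rw [hc, ← Set.encard_coe_eq_coe_finsetCard, ← hinj.encard_image]
  refine Set.encard_le_encard ?_
  rintro _ ⟨i, hi, rfl⟩
  have him : i + 1 ≤ m := Finset.mem_range.1 (Finset.mem_filter.1 hi).1
  exact ⟨⟨(two_mul_le_gridTime hT m i).trans_lt (hg i hi).1,
    (hg i hi).2.trans (gridTime_le hT him)⟩, hg' i hi⟩

/-- The block weight, defined through grids, bounds `exp (-l * N)` from above when the block contains
`N` upcrossings. -/
lemma le_blockWeight {Ω : Type*} {X : ℝ → Ω → ℝ} {ω : Ω}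
    (hr : ∀ t : ℝ, 0 ≤ t → ContinuousWithinAt (fun s => X s ω) (Set.Ici t) t)
    (hl : ∀ t : ℝ, 0 < t → ∃ l : ℝ, Tendsto (fun s => X s ω) (𝓝[<] t) (𝓝 l))
    {T δ l : ℝ} (hT : 0 < T) (hδ : 0 < δ) (hl0 : 0 ≤ l) {N : ℕ}
    (hN : upcrossings X (Ioc (2 * T) (3 * T)) ω = N) :
    ENNReal.ofReal (Real.exp (-(l * N))) ≤ blockWeight X T δ l ω := by
  refine le_liminf_of_le (by isBoundedDefault) ?_
  filter_upwards [eventually_crossCount_le hr hl hT hδ] with m hm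
  rw [hN] at hm
  have hm' : crossCount X T δ m ω ≤ N := by exact_mod_cast hm
  gcongr

/-! ### A supermartingale along the scales `16 ^ n` -/

/-- The Lyapunov function `1 + η * √(|X T| / T)`. It grows when the process is far out relative to
its natural scale, where the blocks may contribute few upcrossings. -/
noncomputable def lyap {Ω : Type*} (X : ℝ → Ω → ℝ) (η T : ℝ) (ω : Ω) : ℝ≥0∞ :=
  ENNReal.ofReal (1 + η * (√|X T ω| / √T))

lemma measurable_lyap {Ω : Type*} (X : ℝ → Ω → ℝ) (η : ℝ) {T : ℝ} (hT : 0 ≤ T) :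
    Measurable[past X T] (lyap X η T) := by
  have h : Measurable fun x : ℝ => ENNReal.ofReal (1 + η * (√|x| / √T)) := by fun_prop
  exact h.comp (measurable_past X hT le_rfl)

lemma one_le_lyap {Ω : Type*} (X : ℝ → Ω → ℝ) {η : ℝ} (hη : 0 ≤ η) (T : ℝ) (ω : Ω) :
    1 ≤ lyap X η T ω := by
  rw [lyap, ENNReal.one_le_ofReal]
  have : 0 ≤ η * (√|X T ω| / √T) := by positivity
  linarith

lemma sqrt_abs_add_le (x z : ℝ) : √|x + z| ≤ √|x| + √|z| := by
  refine (Real.sqrt_le_sqrt (abs_add_le x z)).trans ?_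
  rw [Real.sqrt_le_left (by positivity)]
  nlinarith [Real.sq_sqrt (abs_nonneg x), Real.sq_sqrt (abs_nonneg z),
    mul_nonneg (Real.sqrt_nonneg |x|) (Real.sqrt_nonneg |z|)]

/-- The weight of the first `n` blocks. -/
noncomputable def weight {Ω : Type*} (X : ℝ → Ω → ℝ) (δ l : ℝ) (n : ℕ) (ω : Ω) : ℝ≥0∞ :=
  ∏ k ∈ Finset.range n, blockWeight X (16 ^ k) δ l ω

lemma measurable_weight {Ω : Type*} (X : ℝ → Ω → ℝ) (δ l : ℝ) (n : ℕ) :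
    Measurable[past X (16 ^ n)] (weight X δ l n) := by
  refine Finset.measurable_fun_prod _ fun k hk => ?_
  refine measurable_blockWeight X (by positivity) δ l ?_
  have h : (16 : ℝ) ^ (k + 1) ≤ 16 ^ n := pow_le_pow_right₀ (by norm_num) (Finset.mem_range.1 hk)
  have h' : (0 : ℝ) < 16 ^ k := by positivity
  rw [pow_succ] at h
  linarith

section
variable {Ω : Type*} [mΩ : MeasurableSpace Ω] {P : Measure Ω} [IsProbabilityMeasure P]
  {x₀ : ℝ} {X : ℝ → Ω → ℝ}

/-- Growth of the half-order moment, conditionally on the past. -/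
lemma lintegral_sqrt_le (hX : IsStableProcess 1 (1 / 2) x₀ P X) {c : ℝ}
    (hc : ∀ h : ℝ, 0 < h → ∫⁻ z, ENNReal.ofReal √|z| ∂cau h ≤ ENNReal.ofReal (c * √h))
    {s t : ℝ} (hs : 0 ≤ s) (hst : s < t) {H : Ω → ℝ≥0∞} (hH : Measurable[past X s] H) :
    ∫⁻ ω, H ω * ENNReal.ofReal √|X t ω| ∂P
      ≤ ∫⁻ ω, H ω * (ENNReal.ofReal √|X s ω| + ENNReal.ofReal (c * √(t - s))) ∂P := by
  have := isProbabilityMeasure_cau (sub_pos.2 hst)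
  have hF : Measurable (Function.uncurry fun x z : ℝ =>
      ENNReal.ofReal √|x| + ENNReal.ofReal √|z|) := by
    unfold Function.uncurry; fun_prop
  calc ∫⁻ ω, H ω * ENNReal.ofReal √|X t ω| ∂P
      ≤ ∫⁻ ω, H ω * (ENNReal.ofReal √|X s ω| + ENNReal.ofReal √|X t ω - X s ω|) ∂P := by
        refine lintegral_mono fun ω => mul_le_mul_right ?_ _
        rw [← ENNReal.ofReal_add (by positivity) (by positivity)]
        refine ENNReal.ofReal_le_ofReal ?_
        simpa using sqrt_abs_add_le (X s ω) (X t ω - X s ω)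
    _ = ∫⁻ ω, H ω * ∫⁻ z, (ENNReal.ofReal √|X s ω| + ENNReal.ofReal √|z|) ∂(cau (t - s)) ∂P :=
        lintegral_markov hX hs hst hH hF
    _ ≤ _ := by
        refine lintegral_mono fun ω => mul_le_mul_right ?_ _
        rw [lintegral_add_left measurable_const, lintegral_const, measure_univ, mul_one]
        gcongr
        exact hc _ (sub_pos.2 hst)

/-- The drift inequality between the scales `T` and `16 * T`, before the block weight is used. -/
lemma lintegral_lyap_le (hX : IsStableProcess 1 (1 / 2) x₀ P X) {c : ℝ} (hc0 : 0 < c)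
    (hc : ∀ h : ℝ, 0 < h → ∫⁻ z, ENNReal.ofReal √|z| ∂cau h ≤ ENNReal.ofReal (c * √h))
    {η T : ℝ} (hη : 0 ≤ η) (hT : 0 < T) {H : Ω → ℝ≥0∞} (hH : Measurable[past X T] H) :
    ∫⁻ ω, H ω * ENNReal.ofReal (η * (√|X (16 * T) ω| / √(16 * T))) ∂P
      ≤ ∫⁻ ω, H ω * ENNReal.ofReal (η * (√|X T ω| / √T) / 4 + η * c) ∂P := by
  have h16 : √(16 * T) = 4 * √T := by
    rw [Real.sqrt_mul (by norm_num), show (16 : ℝ) = 4 ^ 2 by norm_num, Real.sqrt_sq (by norm_num)]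
  have hsT : 0 < √T := Real.sqrt_pos.2 hT
  have h15 : √(16 * T - T) ≤ 4 * √T := by
    rw [← h16]; exact Real.sqrt_le_sqrt (by linarith)
  have hHm : Measurable H := hH.mono (past_le hX T) le_rfl
  have hb : 0 ≤ η / (4 * √T) := by positivity
  have m1 : Measurable fun ω => H ω * ENNReal.ofReal √|X (16 * T) ω| := by
    have := hX.measurable (16 * T)
    fun_prop
  have m2 : Measurable fun ω =>
      H ω * (ENNReal.ofReal √|X T ω| + ENNReal.ofReal (c * √(16 * T - T))) := by
    have := hX.measurable T
    fun_prop
  calc ∫⁻ ω, H ω * ENNReal.ofReal (η * (√|X (16 * T) ω| / √(16 * T))) ∂P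
      = ENNReal.ofReal (η / (4 * √T)) * ∫⁻ ω, H ω * ENNReal.ofReal √|X (16 * T) ω| ∂P := by
        rw [← lintegral_const_mul _ m1]
        refine lintegral_congr fun ω => ?_
        rw [h16, mul_left_comm, ← ENNReal.ofReal_mul hb]
        congr 2
        ring
    _ ≤ ENNReal.ofReal (η / (4 * √T)) *
          ∫⁻ ω, H ω * (ENNReal.ofReal √|X T ω| + ENNReal.ofReal (c * √(16 * T - T))) ∂P :=
        mul_le_mul_right (lintegral_sqrt_le hX hc hT.le (by linarith) hH) _
    _ = ∫⁻ ω, ENNReal.ofReal (η / (4 * √T)) *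
          (H ω * (ENNReal.ofReal √|X T ω| + ENNReal.ofReal (c * √(16 * T - T)))) ∂P :=
        (lintegral_const_mul _ m2).symm
    _ ≤ _ := by
        refine lintegral_mono fun ω => ?_
        rw [mul_left_comm, ← ENNReal.ofReal_add (by positivity) (by positivity),
          ← ENNReal.ofReal_mul hb]
        refine mul_le_mul_right (ENNReal.ofReal_le_ofReal ?_) _
        calc η / (4 * √T) * (√|X T ω| + c * √(16 * T - T))
            ≤ η / (4 * √T) * (√|X T ω| + c * (4 * √T)) := by gcongr
          _ = _ := by field_simp

/-- One step of the supermartingale. Within distance `R ^ 2 * T` of the origin the block weight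
provides the contraction; further out the Lyapunov function does, because `√(|X T| / T)` is
divided by `4` when `T` is multiplied by `16`, up to the additive constant `c = R / 16`. -/
lemma lintegral_step_le (hX : IsStableProcess 1 (1 / 2) x₀ P X) {R κ : ℝ} (hR : 0 < R)
    (hκ : 0 < κ) (hκ8 : κ ≤ 1 / 8)
    (hc : ∀ h : ℝ, 0 < h → ∫⁻ z, ENNReal.ofReal √|z| ∂cau h ≤ ENNReal.ofReal (R / 16 * √h))
    {T : ℝ} (hT : 0 < T) {E : Ω → ℝ≥0∞} (hE : Measurable E) (hE1 : ∀ ω, E ω ≤ 1)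
    (hblock : ∀ H : Ω → ℝ≥0∞, Measurable[past X T] H → (∀ ω, H ω ≠ 0 → |X T ω| ≤ R ^ 2 * T) →
      ∫⁻ ω, H ω ∂P ≠ ⊤ → ∫⁻ ω, H ω * E ω ∂P ≤ ENNReal.ofReal (1 - 2 * κ) * ∫⁻ ω, H ω ∂P)
    {H : Ω → ℝ≥0∞} (hH : Measurable[past X T] H)
    (hfin : ∫⁻ ω, H ω * lyap X (2 * κ / R) T ω ∂P ≠ ⊤) :
    ∫⁻ ω, H ω * E ω * lyap X (2 * κ / R) (16 * T) ω ∂P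
      ≤ ENNReal.ofReal (1 - κ) * ∫⁻ ω, H ω * lyap X (2 * κ / R) T ω ∂P := by
  set η : ℝ := 2 * κ / R with hη
  have hη0 : 0 < η := by positivity
  have hηR : η * R = 2 * κ := by rw [hη]; field_simp
  have hsT : 0 < √T := Real.sqrt_pos.2 hT
  -- the drift inequality, weighted by an arbitrary bound `e` for the mass of the block
  have drift : ∀ (G : Ω → ℝ≥0∞) (e : ℝ), 0 ≤ e → Measurable[past X T] G →
      (∫⁻ ω, G ω * E ω ∂P ≤ ENNReal.ofReal e * ∫⁻ ω, G ω ∂P) →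
      (∀ ω, G ω ≠ 0 → e + (η * (√|X T ω| / √T) / 4 + η * (R / 16))
        ≤ (1 - κ) * (1 + η * (√|X T ω| / √T))) →
      ∫⁻ ω, G ω * E ω * lyap X η (16 * T) ω ∂P
        ≤ ENNReal.ofReal (1 - κ) * ∫⁻ ω, G ω * lyap X η T ω ∂P := by
    intro G e he hG hGE hpt
    have hGm : Measurable G := hG.mono (past_le hX T) le_rfl
    have mGE : Measurable fun ω => G ω * E ω := hGm.mul hE
    have meG : Measurable fun ω => ENNReal.ofReal e * G ω := hGm.const_mul _
    have mGl : Measurable fun ω => G ω * lyap X η T ω :=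
      hGm.mul ((measurable_lyap X η hT.le).mono (past_le hX T) le_rfl)
    calc ∫⁻ ω, G ω * E ω * lyap X η (16 * T) ω ∂P
        ≤ ∫⁻ ω, (G ω * E ω +
            G ω * ENNReal.ofReal (η * (√|X (16 * T) ω| / √(16 * T)))) ∂P := by
          refine lintegral_mono fun ω => ?_
          rw [lyap, ENNReal.ofReal_add zero_le_one (by positivity), ENNReal.ofReal_one, mul_add,
            mul_one]
          gcongr
          calc G ω * E ω ≤ G ω * 1 := by gcongr; exact hE1 ω
            _ = G ω := mul_one _
      _ = ∫⁻ ω, G ω * E ω ∂P +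
            ∫⁻ ω, G ω * ENNReal.ofReal (η * (√|X (16 * T) ω| / √(16 * T))) ∂P :=
          lintegral_add_left mGE _
      _ ≤ ENNReal.ofReal e * ∫⁻ ω, G ω ∂P +
            ∫⁻ ω, G ω * ENNReal.ofReal (η * (√|X T ω| / √T) / 4 + η * (R / 16)) ∂P :=
          add_le_add hGE (lintegral_lyap_le hX (by positivity) hc hη0.le hT hG)
      _ = ∫⁻ ω, (ENNReal.ofReal e * G ω +
            G ω * ENNReal.ofReal (η * (√|X T ω| / √T) / 4 + η * (R / 16))) ∂P := by
          rw [lintegral_add_left meG, lintegral_const_mul _ hGm]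
      _ ≤ ∫⁻ ω, ENNReal.ofReal (1 - κ) * (G ω * lyap X η T ω) ∂P := by
          refine lintegral_mono fun ω => ?_
          rcases eq_or_ne (G ω) 0 with h0 | h0
          · simp [h0]
          · rw [mul_comm (ENNReal.ofReal e), ← mul_add, ← ENNReal.ofReal_add he (by positivity),
              mul_left_comm, lyap, ← ENNReal.ofReal_mul (by linarith)]
            exact mul_le_mul_right (ENNReal.ofReal_le_ofReal (hpt ω h0)) _
      _ = _ := lintegral_const_mul _ mGl
  have hA : MeasurableSet[past X T] {ω | |X T ω| ≤ R ^ 2 * T} :=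
    (measurable_past X hT.le le_rfl) (measurableSet_le measurable_norm measurable_const)
  set A := {ω | |X T ω| ≤ R ^ 2 * T} with hAdef
  have hrA : ∀ ω, ω ∈ A ↔ √|X T ω| / √T ≤ R := by
    intro ω
    rw [div_le_iff₀ hsT, Real.sqrt_le_left (by positivity), mul_pow, Real.sq_sqrt hT.le]
    rfl
  set G := A.indicator H with hG
  set G' := Aᶜ.indicator H with hG'
  have hGm : Measurable[past X T] G := hH.indicator hA
  have hGm' : Measurable[past X T] G' := hH.indicator hA.compl
  have hsum : ∀ ω, H ω = G ω + G' ω := fun ω =>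
    (congrFun (Set.indicator_self_add_compl A H) ω).symm
  have hGH : ∀ ω, G ω ≤ H ω := fun ω => Set.indicator_le_self _ _ _
  have hGfin : ∫⁻ ω, G ω ∂P ≠ ⊤ := by
    refine ne_top_of_le_ne_top hfin (lintegral_mono fun ω => ?_)
    calc G ω ≤ H ω * 1 := by rw [mul_one]; exact hGH ω
      _ ≤ _ := by gcongr; exact one_le_lyap X hη0.le T ω
  have near := drift G (1 - 2 * κ) (by linarith) hGm
    (hblock G hGm (fun ω h => (Set.mem_of_indicator_ne_zero h : ω ∈ A)) hGfin) (by
      intro ω h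
      have hr := (hrA ω).1 (Set.mem_of_indicator_ne_zero h)
      have h0 : 0 ≤ √|X T ω| / √T := by positivity
      have h1 : η * (√|X T ω| / √T) ≤ 2 * κ := hηR ▸ mul_le_mul_of_nonneg_left hr hη0.le
      have h2 : 0 ≤ η * (√|X T ω| / √T) := by positivity
      have h3 : η * (R / 16) = κ / 8 := by rw [mul_div_assoc', hηR]; ring
      rw [h3]
      nlinarith)
  have far := drift G' 1 zero_le_one hGm' (by
      rw [ENNReal.ofReal_one, one_mul]
      refine lintegral_mono fun ω => ?_
      calc G' ω * E ω ≤ G' ω * 1 := by gcongr; exact hE1 ω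
        _ = G' ω := mul_one _) (by
      intro ω h
      have hr : ¬ √|X T ω| / √T ≤ R := fun h' =>
        Set.mem_of_indicator_ne_zero h ((hrA ω).2 h')
      have h1 : 2 * κ ≤ η * (√|X T ω| / √T) :=
        hηR ▸ mul_le_mul_of_nonneg_left (not_le.1 hr).le hη0.le
      have h3 : η * (R / 16) = κ / 8 := by rw [mul_div_assoc', hηR]; ring
      rw [h3]
      nlinarith)
  have hl16 : Measurable (lyap X η (16 * T)) :=
    (measurable_lyap X η (by positivity)).mono (past_le hX _) le_rfl
  have hlT : Measurable (lyap X η T) := (measurable_lyap X η hT.le).mono (past_le hX _) le_rfl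
  have hG0 : Measurable G := hGm.mono (past_le hX T) le_rfl
  have mL : Measurable fun ω => G ω * E ω * lyap X η (16 * T) ω := (hG0.mul hE).mul hl16
  have mR : Measurable fun ω => G ω * lyap X η T ω := hG0.mul hlT
  simp_rw [hsum, add_mul]
  rw [lintegral_add_left mL, lintegral_add_left mR, mul_add]
  exact add_le_add near far

/-- Exponential decay of the weights, with a rate tied to the arbitrarily large number `M`. -/
lemma exists_weight_bound (hX : IsStableProcess 1 (1 / 2) x₀ P X) {M : ℝ} (hM : 0 < M) :
    ∃ δ l : ℝ, 0 < δ ∧ 0 < l ∧ ∃ C : ℝ≥0∞, C ≠ ⊤ ∧ ∀ n : ℕ,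
      ∫⁻ ω, weight X δ l n ω ∂P ≤ ENNReal.ofReal (Real.exp (-(l * M))) ^ n * C := by
  obtain ⟨c, hc0, hc⟩ := exists_sqrt_moment
  set R : ℝ := 16 * c with hR
  have hR0 : 0 < R := by positivity
  have hc' : ∀ h : ℝ, 0 < h →
      ∫⁻ z, ENNReal.ofReal √|z| ∂cau h ≤ ENNReal.ofReal (R / 16 * √h) := by
    have : R / 16 = c := by rw [hR]; ring
    rwa [this]
  obtain ⟨δ, l, hδ, hl, hlM, hblock⟩ := exists_block hX (R := R ^ 2) (by positivity) hM
  have hκ : 0 < l * M := by positivity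
  set η : ℝ := 2 * (l * M) / R with hη
  have hη0 : 0 < η := by positivity
  refine ⟨δ, l, hδ, hl, ∫⁻ ω, lyap X η 1 ω ∂P, ?_, ?_⟩
  · have h1 := lintegral_sqrt_le hX hc le_rfl zero_lt_one (H := fun _ => 1) measurable_const
    have h2 : ∫⁻ ω, 1 * (ENNReal.ofReal √|X 0 ω| + ENNReal.ofReal (c * √(1 - 0))) ∂P
        = ENNReal.ofReal √|x₀| + ENNReal.ofReal (c * √(1 - 0)) := by
      rw [lintegral_congr_ae (g := fun _ =>
        ENNReal.ofReal √|x₀| + ENNReal.ofReal (c * √(1 - 0))), lintegral_const, measure_univ,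
        mul_one]
      filter_upwards [hX.init] with ω h
      rw [h, one_mul]
    rw [h2] at h1
    have h3 : ∫⁻ ω, lyap X η 1 ω ∂P
        = 1 + ENNReal.ofReal η * ∫⁻ ω, 1 * ENNReal.ofReal √|X 1 ω| ∂P := by
      have m1 : Measurable fun ω => 1 * ENNReal.ofReal √|X 1 ω| := by
        have := hX.measurable 1
        fun_prop
      have e : ∀ ω, lyap X η 1 ω
          = 1 + ENNReal.ofReal η * (1 * ENNReal.ofReal √|X 1 ω|) := fun ω => by
        rw [lyap, ENNReal.ofReal_add zero_le_one (by positivity), ENNReal.ofReal_one,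
          ENNReal.ofReal_mul hη0.le, Real.sqrt_one, div_one, one_mul]
      simp_rw [e]
      rw [lintegral_add_left measurable_const, lintegral_const_mul _ m1, lintegral_const,
        measure_univ, mul_one]
    rw [h3]
    refine ENNReal.add_ne_top.2 ⟨ENNReal.one_ne_top, ENNReal.mul_ne_top ENNReal.ofReal_ne_top ?_⟩
    exact ne_top_of_le_ne_top
      (ENNReal.add_ne_top.2 ⟨ENNReal.ofReal_ne_top, ENNReal.ofReal_ne_top⟩) h1
  · intro n
    set C := ∫⁻ ω, lyap X η 1 ω ∂P with hC
    have main : ∀ n : ℕ, ∫⁻ ω, weight X δ l n ω * lyap X η (16 ^ n) ω ∂P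
        ≤ ENNReal.ofReal (Real.exp (-(l * M))) ^ n * C := by
      intro n
      induction n with
      | zero => simp [weight, hC]
      | succ n ih =>
        rcases eq_or_ne C ⊤ with hCt | hCt
        · rw [hCt, ENNReal.mul_top (by positivity)]; exact le_top
        have hfin := ne_top_of_le_ne_top
          (ENNReal.mul_ne_top (ENNReal.pow_ne_top ENNReal.ofReal_ne_top) hCt) ih
        have hpos : (0 : ℝ) < 16 ^ n := by positivity
        have step := lintegral_step_le hX hR0 hκ hlM hc' hpos
          ((measurable_blockWeight X hpos δ l le_rfl).mono (past_le hX _) le_rfl)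
          (blockWeight_le_one X _ δ hl.le) (hblock _ hpos) (measurable_weight X δ l n) hfin
        have e : ∀ ω, weight X δ l (n + 1) ω = weight X δ l n ω * blockWeight X (16 ^ n) δ l ω :=
          fun ω => Finset.prod_range_succ _ _
        simp_rw [e, pow_succ' (16 : ℝ)]
        refine step.trans ?_
        rw [pow_succ', mul_assoc]
        gcongr
        have := Real.add_one_le_exp (-(l * M))
        linarith
    refine le_trans (lintegral_mono fun ω => ?_) (main n)
    calc weight X δ l n ω = weight X δ l n ω * 1 := (mul_one _).symm
      _ ≤ _ := by gcongr; exact one_le_lyap X hη0.le _ ω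

/-- Half of the exponential rate of `exists_weight_bound` is kept almost surely, since the other half
makes the rescaled weights summable in mean. -/
lemma ae_eventually_weight_le (hX : IsStableProcess 1 (1 / 2) x₀ P X) {M : ℝ} (hM : 0 < M) :
    ∃ δ l : ℝ, 0 < δ ∧ 0 < l ∧ ∀ᵐ ω ∂P, ∀ᶠ n : ℕ in atTop,
      weight X δ l n ω ≤ ENNReal.ofReal (Real.exp (-(l * M * n / 2))) := by
  obtain ⟨δ, l, hδ, hl, C, hC, h⟩ := exists_weight_bound hX hM
  refine ⟨δ, l, hδ, hl, ?_⟩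
  have hκ : 0 < l * M := by positivity
  have hm : ∀ n, Measurable (weight X δ l n) := fun n =>
    (measurable_weight X δ l n).mono (past_le hX _) le_rfl
  set r := ENNReal.ofReal (Real.exp (l * M / 2)) with hr
  set q := ENNReal.ofReal (Real.exp (-(l * M / 2))) with hq
  have hq1 : q < 1 := by
    rw [hq, ENNReal.ofReal_lt_one, Real.exp_lt_one_iff]; linarith
  have hrq : r * ENNReal.ofReal (Real.exp (-(l * M))) = q := by
    rw [hr, hq, ← ENNReal.ofReal_mul (Real.exp_nonneg _), ← Real.exp_add]; ring_nf
  have hrq1 : q * r = 1 := by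
    rw [hr, hq, ← ENNReal.ofReal_mul (Real.exp_nonneg _), ← Real.exp_add]; simp
  have hsum : ∫⁻ ω, ∑' n, r ^ n * weight X δ l n ω ∂P ≠ ⊤ := by
    rw [lintegral_tsum fun n => ((hm n).const_mul _).aemeasurable]
    refine ne_top_of_le_ne_top (b := ∑' n : ℕ, q ^ n * C) ?_ (ENNReal.tsum_le_tsum fun n => ?_)
    · rw [ENNReal.tsum_mul_right, ENNReal.tsum_geometric]
      refine ENNReal.mul_ne_top (ENNReal.inv_ne_top.2 ?_) hC
      exact (tsub_pos_iff_lt.2 hq1).ne'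
    · rw [lintegral_const_mul _ (hm n), ← hrq, mul_pow, mul_assoc]
      gcongr
      exact h n
  have hae := ae_lt_top (Measurable.tsum fun n => (hm n).const_mul _) hsum
  filter_upwards [hae] with ω hω
  have ht := ENNReal.tendsto_atTop_zero_of_tsum_ne_top hω.ne
  filter_upwards [ht.eventually_le_const zero_lt_one] with n hn
  have e : ENNReal.ofReal (Real.exp (-(l * M * n / 2))) = q ^ n := by
    rw [hq, ← ENNReal.ofReal_pow (Real.exp_nonneg _), ← Real.exp_nat_mul]
    ring_nf
  calc weight X δ l n ω = q ^ n * (r ^ n * weight X δ l n ω) := by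
        rw [← mul_assoc, ← mul_pow, hrq1, one_pow, one_mul]
    _ ≤ q ^ n * 1 := by gcongr
    _ = _ := by rw [mul_one, e]

end

/-! ### From weights to upcrossings -/

lemma upcrossings_mono {Ω : Type*} (X : ℝ → Ω → ℝ) {S S' : Set ℝ} (h : S ⊆ S') (ω : Ω) :
    upcrossings X S ω ≤ upcrossings X S' ω :=
  Set.encard_le_encard fun _ hs => ⟨h hs.1, hs.2⟩

/-- The blocks `(2 * 16 ^ k, 3 * 16 ^ k]` are disjoint. -/
lemma sum_upcrossings_le {Ω : Type*} (X : ℝ → Ω → ℝ) (ω : Ω) (n : ℕ) :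
    ∑ k ∈ Finset.range n, upcrossings X (Ioc (2 * 16 ^ k) (3 * 16 ^ k)) ω
      ≤ upcrossings X (Ioc 0 (16 ^ n)) ω := by
  induction n with
  | zero => simp
  | succ n ih =>
    have hp : (0 : ℝ) < 16 ^ n := by positivity
    rw [Finset.sum_range_succ]
    refine (add_le_add_left ih _).trans ?_
    unfold _root_.upcrossings
    rw [← Set.encard_union_eq]
    · refine Set.encard_le_encard ?_
      rw [pow_succ]
      rintro s (⟨hs, h⟩ | ⟨hs, h⟩)
      · exact ⟨⟨hs.1, by linarith [hs.2]⟩, h⟩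
      · exact ⟨⟨by linarith [hs.1], by linarith [hs.2]⟩, h⟩
    · rw [Set.disjoint_left]
      rintro s ⟨hs, -⟩ ⟨hs', -⟩
      linarith [hs.2, hs'.1]

section
variable {Ω : Type*} [mΩ : MeasurableSpace Ω] {P : Measure Ω} [IsProbabilityMeasure P]
  {x₀ : ℝ} {X : ℝ → Ω → ℝ}

lemma ae_eventually_le_upcrossings (hX : IsStableProcess 1 (1 / 2) x₀ P X) {M : ℝ} (hM : 0 < M) :
    ∀ᵐ ω ∂P, ∀ᶠ n : ℕ in atTop,
      ENNReal.ofReal (M * n / 2) ≤ (upcrossings X (Ioc 0 (16 ^ n)) ω : ℝ≥0∞) := by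
  obtain ⟨δ, l, hδ, hl, hw⟩ := ae_eventually_weight_le hX hM
  filter_upwards [hw, hX.cadlag] with ω hω hcad
  filter_upwards [hω] with n hn
  rcases eq_or_ne (upcrossings X (Ioc 0 (16 ^ n)) ω) ⊤ with htop | htop
  · simp [htop]
  obtain ⟨U, hU⟩ := ENat.ne_top_iff_exists.1 htop
  have hsum := sum_upcrossings_le X ω n
  rw [← hU] at hsum ⊢
  have hfin : ∀ k ∈ Finset.range n, ∃ N : ℕ,
      upcrossings X (Ioc (2 * 16 ^ k) (3 * 16 ^ k)) ω = N := fun k hk => by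
    have h := (Finset.single_le_sum (fun _ _ => zero_le) hk).trans hsum
    obtain ⟨N, hN⟩ := ENat.ne_top_iff_exists.1 (ne_top_of_le_ne_top (ENat.natCast_ne_top U) h)
    exact ⟨N, hN.symm⟩
  choose! N hN using hfin
  have hNU : ∑ k ∈ Finset.range n, N k ≤ U := by
    rw [Finset.sum_congr rfl hN] at hsum
    exact_mod_cast hsum
  have hprod : ENNReal.ofReal (Real.exp (-(l * U))) ≤ weight X δ l n ω := by
    calc ENNReal.ofReal (Real.exp (-(l * U)))
        ≤ ENNReal.ofReal (∏ k ∈ Finset.range n, Real.exp (-(l * N k))) := by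
          rw [← Real.exp_sum, Finset.sum_neg_distrib, ← Finset.mul_sum]
          have : (∑ k ∈ Finset.range n, (N k : ℝ)) ≤ U := by exact_mod_cast hNU
          gcongr
      _ = ∏ k ∈ Finset.range n, ENNReal.ofReal (Real.exp (-(l * N k))) :=
          ENNReal.ofReal_prod_of_nonneg fun _ _ => Real.exp_nonneg _
      _ ≤ _ := Finset.prod_le_prod' fun k hk =>
          le_blockWeight hcad.1 hcad.2 (by positivity) hδ hl.le (hN k hk)
  have h := (ENNReal.ofReal_le_ofReal_iff (Real.exp_nonneg _)).1 (hprod.trans hn)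
  rw [Real.exp_le_exp] at h
  have h' : M * n / 2 ≤ U := by
    refine le_of_mul_le_mul_left ?_ hl
    linarith
  calc ENNReal.ofReal (M * n / 2) ≤ ENNReal.ofReal U := ENNReal.ofReal_le_ofReal h'
    _ = _ := by simp

end

lemma log_sixteen_le : Real.log 16 ≤ 3 := by
  rw [Real.log_le_iff_le_exp (by norm_num)]
  have h := Real.exp_one_gt_d9
  calc (16 : ℝ) ≤ 2.7 ^ 3 := by norm_num
    _ ≤ Real.exp 1 ^ 3 := by gcongr; linarith
    _ = Real.exp 3 := by rw [← Real.exp_nat_mul]; norm_num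

theorem cauchy_upcrossings_at_infinity
    {Ω : Type*} [MeasurableSpace Ω] (P : Measure Ω) [IsProbabilityMeasure P]
    (ρ : ℝ) (hρ : ρ ∈ Set.Ioo (0 : ℝ) 1)
    (x₀ : ℝ) (hx₀ : x₀ ≠ 0) (X : ℝ → Ω → ℝ) (hX : IsStableProcess 1 ρ x₀ P X) :
    ∀ᵐ ω ∂P,
      Tendsto
        (fun t : ℝ =>
          (upcrossings X (Set.Ioc 0 t) ω : ℝ≥0∞) / ENNReal.ofReal (Real.log t))
        atTop (𝓝 ⊤) := by
  obtain rfl := rho_eq_half hρ hX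
  have hall : ∀ᵐ ω ∂P, ∀ K : ℕ, ∀ᶠ n : ℕ in atTop, ENNReal.ofReal (12 * ((K : ℝ) + 1) * n / 2)
      ≤ (upcrossings X (Ioc 0 (16 ^ n)) ω : ℝ≥0∞) :=
    ae_all_iff.2 fun K => ae_eventually_le_upcrossings hX (by positivity)
  filter_upwards [hall] with ω hω
  rw [ENNReal.tendsto_nhds_top_iff_nat]
  intro K
  obtain ⟨n₀, hn₀⟩ := eventually_atTop.1 (hω K)
  filter_upwards [eventually_ge_atTop (16 ^ (n₀ + 1) : ℝ)] with t ht
  have ht1 : (16 : ℝ) ≤ t := by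
    refine le_trans ?_ ht
    exact le_self_pow₀ (by norm_num) (Nat.succ_ne_zero _)
  have hlog : 0 < Real.log t := Real.log_pos (by linarith)
  obtain ⟨n, hn1, hn2⟩ := exists_nat_pow_near (by linarith : (1 : ℝ) ≤ t)
    (by norm_num : (1 : ℝ) < 16)
  have hn : n₀ + 1 < n + 1 := (pow_lt_pow_iff_right₀ (by norm_num)).1 (ht.trans_lt hn2)
  have hn1' : (1 : ℝ) ≤ n := by exact_mod_cast (by omega : 1 ≤ n)
  have hlog2 : Real.log t ≤ 6 * n := by
    calc Real.log t ≤ Real.log (16 ^ (n + 1)) := Real.log_le_log (by linarith) hn2.le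
      _ = (n + 1) * Real.log 16 := by rw [Real.log_pow]; push_cast; rfl
      _ ≤ (n + 1) * 3 := by gcongr; exact log_sixteen_le
      _ ≤ 6 * n := by linarith
  have hU : ENNReal.ofReal (((K : ℝ) + 1) * Real.log t)
      ≤ (upcrossings X (Ioc 0 t) ω : ℝ≥0∞) := by
    calc ENNReal.ofReal (((K : ℝ) + 1) * Real.log t)
        ≤ ENNReal.ofReal (12 * ((K : ℝ) + 1) * n / 2) := by
          refine ENNReal.ofReal_le_ofReal ?_
          have : ((K : ℝ) + 1) * Real.log t ≤ ((K : ℝ) + 1) * (6 * n) := by gcongr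
          linarith
      _ ≤ _ := hn₀ n (by omega)
      _ ≤ _ := by
          have h := upcrossings_mono X (Ioc_subset_Ioc_right hn1 : Ioc 0 (16 ^ n) ⊆ Ioc 0 t) ω
          exact_mod_cast h
  calc (K : ℝ≥0∞) < (K : ℝ≥0∞) + 1 := ENNReal.lt_add_right (ENNReal.natCast_ne_top K) one_ne_zero
    _ ≤ _ := by
      rw [ENNReal.le_div_iff_mul_le (Or.inl (ENNReal.ofReal_pos.2 hlog).ne')
        (Or.inl ENNReal.ofReal_ne_top)]
      refine le_trans (le_of_eq ?_) hU
      rw [ENNReal.ofReal_mul (by positivity), ENNReal.ofReal_add (by positivity) zero_le_one,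
        ENNReal.ofReal_natCast, ENNReal.ofReal_one]
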